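/- arXiv:1512.06918 — 3 statements merged into one kernel-verified Lean document; each statement's English description precedes it below -/
import Mathlib

section
/- Let ψ be a smooth function on ℝ supported in {1/4 ≤ |x| ≤ 1}, ψ_j(t) = 2^{-j} ψ(2^{-j} t), and define H_j(x,y) = ∫ e^{2πi(x t² - y t)} ψ_j(t) dt. With ‖(x,y)‖_j := 2^{2j}|x| + 2^{j}|y|, one has |H_j(x,y)| ≲ min{ ‖(x,y)‖_j , ‖(x,y)‖_j^{-1/2} }, uniformly in j ∈ ℕ and (x,y) ∈ ℝ². -/
open Real Set

noncomputable section

/-!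
Rescaling `t` reduces `H_j` to scale one. The bound for small `(x, y)` holds because `ψ` has mean
zero and `|e^{iθ} - 1| ≤ |θ|`. The decay is obtained by one integration by parts, without separating
the stationary from the nonstationary case: for the phase `φ(t) = xt² - yt`, with `2π` absorbed into
`x` and `y`, put `l² = |x| + |y|` and replace the singular factor `1 / φ'` by its regularization
`φ' / (φ'² + l²)`. This leaves the error `l² / (φ'² + l²)`. Its denominator is at least `l³` unless
`l² ≤ 4(1 + |t|)|x|`, and in that region the Cauchy integral
`|x| ∫ dt / ((2xt - y)² + l²) ≤ π / (2l)` shows that it contributes `O(1 / l)`.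
-/

open MeasureTheory Complex

section RegularizedInverse

/-- The regularized reciprocal `u / (u² + l²)` of `u` at scale `l`: it is close to `1 / u` for
`|u| ≫ l` and stays bounded by `1 / (2 l)` near `u = 0`. -/
def regInv (l u : ℝ) : ℝ := u / (u ^ 2 + l ^ 2)

variable {l : ℝ}

lemma sq_add_sq_pos (hl : 0 < l) (u : ℝ) : 0 < u ^ 2 + l ^ 2 := by positivity

lemma continuous_inv_sq_add_sq (hl : 0 < l) : Continuous fun u : ℝ => (u ^ 2 + l ^ 2)⁻¹ :=
  (by fun_prop : Continuous fun u : ℝ => u ^ 2 + l ^ 2).inv₀ fun u => (sq_add_sq_pos hl u).ne'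

lemma inv_sq_add_sq_le (hl : 0 < l) (u : ℝ) : (u ^ 2 + l ^ 2)⁻¹ ≤ (l ^ 2)⁻¹ := by
  gcongr
  exact le_add_of_nonneg_left (sq_nonneg u)

lemma one_sub_mul_regInv (hl : 0 < l) (u : ℝ) :
    1 - u * regInv l u = l ^ 2 * (u ^ 2 + l ^ 2)⁻¹ := by
  have := (sq_add_sq_pos hl u).ne'
  rw [regInv]
  field_simp
  ring

lemma continuous_regInv (hl : 0 < l) : Continuous (regInv l) :=
  continuous_id.mul (continuous_inv_sq_add_sq hl)

lemma abs_regInv_le (hl : 0 < l) (u : ℝ) : |regInv l u| ≤ (2 * l)⁻¹ := by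
  rw [regInv, abs_div, abs_of_pos (sq_add_sq_pos hl u), ← one_div,
    div_le_div_iff₀ (sq_add_sq_pos hl u) (by positivity), ← sq_abs u]
  linarith [two_mul_le_add_sq |u| l]

lemma abs_mul_regInv_le (hl : 0 < l) (u : ℝ) : |u * regInv l u| ≤ 1 := by
  rw [regInv, ← mul_div_assoc, ← sq, abs_of_nonneg (by positivity),
    div_le_one (sq_add_sq_pos hl u)]
  exact le_add_of_nonneg_right (sq_nonneg l)

lemma hasDerivAt_regInv (hl : 0 < l) (u : ℝ) :
    HasDerivAt (regInv l) ((l ^ 2 - u ^ 2) / (u ^ 2 + l ^ 2) ^ 2) u := by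
  refine ((hasDerivAt_id u).div ((hasDerivAt_pow 2 u).add_const (l ^ 2))
    (sq_add_sq_pos hl u).ne').congr_deriv ?_
  simp only [id, Nat.cast_ofNat]
  ring

lemma abs_deriv_regInv_le (hl : 0 < l) (u : ℝ) :
    |deriv (regInv l) u| ≤ (u ^ 2 + l ^ 2)⁻¹ := by
  have hpos := sq_add_sq_pos hl u
  have hnum : |l ^ 2 - u ^ 2| ≤ u ^ 2 + l ^ 2 := by
    rw [abs_le]; constructor <;> linarith [sq_nonneg u, sq_nonneg l]
  rw [(hasDerivAt_regInv hl u).deriv, abs_div, abs_of_pos (pow_pos hpos 2), ← one_div,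
    div_le_div_iff₀ (pow_pos hpos 2) hpos, one_mul, sq (u ^ 2 + l ^ 2)]
  gcongr

lemma norm_sub_smul_regInv_smul {E : Type*} [NormedAddCommGroup E] [NormedSpace ℝ E]
    (hl : 0 < l) (u : ℝ) (w : E) :
    ‖w - u • regInv l u • w‖ = l ^ 2 * ((u ^ 2 + l ^ 2)⁻¹ * ‖w‖) := by
  have hfactor : w - u • regInv l u • w = (l ^ 2 * (u ^ 2 + l ^ 2)⁻¹) • w := by
    rw [← one_sub_mul_regInv hl, sub_smul, one_smul, mul_smul]
  rw [hfactor, norm_smul, Real.norm_of_nonneg (by positivity), mul_assoc]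

end RegularizedInverse

section CauchyKernel

variable {l : ℝ}

lemma inv_sq_add_sq_eq_cauchyPDFReal (hl : 0 < l) (u v : ℝ) :
    ((u - v) ^ 2 + l ^ 2)⁻¹ = π / l * ProbabilityTheory.cauchyPDFReal v l.toNNReal u := by
  rw [ProbabilityTheory.cauchyPDFReal_def, Real.coe_toNNReal l hl.le]
  field_simp

lemma integrable_inv_affine_sq_add_sq {u : ℝ} (hl : 0 < l) (hu : u ≠ 0) (v : ℝ) :
    Integrable fun t : ℝ => ((u * t - v) ^ 2 + l ^ 2)⁻¹ := by
  simp only [inv_sq_add_sq_eq_cauchyPDFReal hl]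
  exact ((ProbabilityTheory.integrable_cauchyPDFReal v).comp_mul_left' hu).const_mul _

lemma integral_inv_affine_sq_add_sq (hl : 0 < l) (u v : ℝ) :
    ∫ t : ℝ, ((u * t - v) ^ 2 + l ^ 2)⁻¹ = π / (|u| * l) := by
  simp only [inv_sq_add_sq_eq_cauchyPDFReal hl]
  rw [integral_const_mul, Measure.integral_comp_mul_left,
    ProbabilityTheory.integral_cauchyPDFReal_eq_one v (Real.toNNReal_pos.2 hl).ne', smul_eq_mul,
    mul_one, abs_inv]
  field_simp

lemma integrable_abs_mul_inv_sq_add_sq (hl : 0 < l) (x y : ℝ) :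
    Integrable fun t : ℝ => |x| * ((2 * x * t - y) ^ 2 + l ^ 2)⁻¹ := by
  rcases eq_or_ne x 0 with rfl | hx
  · simp only [abs_zero, zero_mul, integrable_fun_zero]
  · exact (integrable_inv_affine_sq_add_sq hl (mul_ne_zero two_ne_zero hx) y).const_mul _

lemma integral_abs_mul_inv_sq_add_sq_le (hl : 0 < l) (x y : ℝ) :
    ∫ t : ℝ, |x| * ((2 * x * t - y) ^ 2 + l ^ 2)⁻¹ ≤ π / (2 * l) := by
  rw [integral_const_mul, integral_inv_affine_sq_add_sq hl, abs_mul, abs_two]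
  rcases eq_or_ne x 0 with rfl | hx
  · rw [abs_zero, zero_mul]
    positivity
  · apply le_of_eq
    field_simp

end CauchyKernel

section NonstationaryPhase

variable {E : Type*} [NormedAddCommGroup E] {φ φ' φ'' : ℝ → ℝ} {ψ v v' : ℝ → E}

lemma integrable_inv_sq_add_sq_mul_norm {l : ℝ} (hl : 0 < l) (hφ' : Continuous φ')
    (hψ : Integrable ψ) : Integrable fun t => (φ' t ^ 2 + l ^ 2)⁻¹ * ‖ψ t‖ :=
  hψ.norm.bdd_mul ((continuous_inv_sq_add_sq hl).comp hφ').aestronglyMeasurable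
    (.of_forall fun t => by
      rw [Real.norm_of_nonneg (by positivity)]
      exact inv_sq_add_sq_le hl _)

variable [NormedSpace ℂ E]

lemma integrable_cexp_I_mul_smul (hφ : Continuous φ) (hψ : Integrable ψ) :
    Integrable fun t => cexp (I * (φ t : ℂ)) • ψ t :=
  hψ.bdd_smul 1 (by fun_prop : Continuous fun t => cexp (I * (φ t : ℂ))).aestronglyMeasurable
    (.of_forall fun t => (norm_exp_I_mul_ofReal (φ t)).le)

lemma integral_cexp_I_mul_smul_deriv_smul (hφ : ∀ t, HasDerivAt φ (φ' t) t)
    (hv : ∀ t, HasDerivAt v (v' t) t) (hvi : Integrable v) (hvi' : Integrable v')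
    (hφv : Integrable fun t => φ' t • v t) :
    ∫ t, cexp (I * (φ t : ℂ)) • φ' t • v t = I • ∫ t, cexp (I * (φ t : ℂ)) • v' t := by
  have hφc : Continuous φ := continuous_iff_continuousAt.2 fun t => (hφ t).continuousAt
  have hexp (t : ℝ) : HasDerivAt (fun t => cexp (I * (φ t : ℂ)))
      (cexp (I * (φ t : ℂ)) * (I * (φ' t : ℂ))) t := ((hφ t).ofReal_comp.const_mul I).cexp
  have hphase (t : ℝ) : (cexp (I * (φ t : ℂ)) * (I * (φ' t : ℂ))) • v t =
      I • cexp (I * (φ t : ℂ)) • φ' t • v t := by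
    rw [← Complex.coe_smul (φ' t), smul_smul, smul_smul]
    ring_nf
  have hparts := integral_bilinear_hasDerivAt_right_eq_neg_left_of_integrable
    (L := (ContinuousLinearMap.lsmul ℝ ℂ : ℂ →L[ℝ] E →L[ℝ] E))
    (fun t _ => hexp t) (fun t _ => hv t) (integrable_cexp_I_mul_smul hφc hvi')
    (by simpa only [ContinuousLinearMap.lsmul_apply, hphase] using
      (integrable_cexp_I_mul_smul hφc hφv).fun_smul I)
    (integrable_cexp_I_mul_smul hφc hvi)
  simp only [ContinuousLinearMap.lsmul_apply, hphase, integral_smul] at hparts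
  rw [hparts, smul_neg, smul_smul, I_mul_I, neg_one_smul, neg_neg]

lemma norm_integral_cexp_I_mul_smul_le (hφ : ∀ t, HasDerivAt φ (φ' t) t) (hψ : Integrable ψ)
    (hv : ∀ t, HasDerivAt v (v' t) t) (hvi : Integrable v) (hvi' : Integrable v')
    (hφv : Integrable fun t => φ' t • v t) :
    ‖∫ t, cexp (I * (φ t : ℂ)) • ψ t‖ ≤ (∫ t, ‖ψ t - φ' t • v t‖) + ∫ t, ‖v' t‖ := by
  have hφc : Continuous φ := continuous_iff_continuousAt.2 fun t => (hφ t).continuousAt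
  have hnorm (w : ℝ → E) : ‖∫ t, cexp (I * (φ t : ℂ)) • w t‖ ≤ ∫ t, ‖w t‖ :=
    (norm_integral_le_integral_norm _).trans_eq <| by
      simp only [norm_smul, norm_exp_I_mul_ofReal, one_mul]
  have hsplit : ∫ t, cexp (I * (φ t : ℂ)) • ψ t =
      (∫ t, cexp (I * (φ t : ℂ)) • (ψ t - φ' t • v t)) +
        I • ∫ t, cexp (I * (φ t : ℂ)) • v' t := by
    rw [← integral_cexp_I_mul_smul_deriv_smul hφ hv hvi hvi' hφv,
      ← integral_add (by exact integrable_cexp_I_mul_smul hφc (hψ.sub hφv))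
        (integrable_cexp_I_mul_smul hφc hφv)]
    simp only [← smul_add, sub_add_cancel]
  rw [hsplit]
  refine (norm_add_le _ _).trans (add_le_add (hnorm _) ?_)
  rw [norm_smul, norm_I, one_mul]
  exact hnorm _

lemma integrable_smul_of_abs_le {f : ℝ → ℝ} {C : ℝ} (hψ : Integrable ψ) (hf : Measurable f)
    (hC : ∀ t, |f t| ≤ C) : Integrable fun t => f t • ψ t :=
  Integrable.bdd_smul (𝕜 := ℝ) hψ C hf.aestronglyMeasurable (.of_forall hC)

lemma norm_integral_cexp_I_mul_smul_le_of_abs_deriv2_le {l B : ℝ} (hl : 0 < l)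
    (hφ : ∀ t, HasDerivAt φ (φ' t) t) (hφ' : ∀ t, HasDerivAt φ' (φ'' t) t)
    (hB : ∀ t, |φ'' t| ≤ B) (hψd : Differentiable ℝ ψ) (hψ : Integrable ψ)
    (hψ' : Integrable (deriv ψ)) :
    ‖∫ t, cexp (I * (φ t : ℂ)) • ψ t‖ ≤
      (l ^ 2 + B) * (∫ t, (φ' t ^ 2 + l ^ 2)⁻¹ * ‖ψ t‖) + (2 * l)⁻¹ * ∫ t, ‖deriv ψ t‖ := by
  have hφ'c : Continuous φ' := continuous_iff_continuousAt.2 fun t => (hφ' t).continuousAt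
  set g : ℝ → ℝ := fun t => regInv l (φ' t)
  have hgc : Continuous g := (continuous_regInv hl).comp hφ'c
  have hgd (t : ℝ) : HasDerivAt g (deriv (regInv l) (φ' t) * φ'' t) t :=
    (hasDerivAt_regInv hl _).differentiableAt.hasDerivAt.comp t (hφ' t)
  have hg_le (t : ℝ) : |g t| ≤ (2 * l)⁻¹ := abs_regInv_le hl _
  have hg'_le (t : ℝ) : |deriv g t| ≤ B * (φ' t ^ 2 + l ^ 2)⁻¹ := by
    rw [(hgd t).deriv, abs_mul, mul_comm]
    exact mul_le_mul (hB t) (abs_deriv_regInv_le hl _) (abs_nonneg _) ((abs_nonneg _).trans (hB t))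
  have hkψ := integrable_inv_sq_add_sq_mul_norm hl hφ'c hψ
  have hgψ' := integrable_smul_of_abs_le hψ' hgc.measurable hg_le
  have hg'ψ := integrable_smul_of_abs_le hψ (measurable_deriv g) fun t => (hg'_le t).trans
    (mul_le_mul_of_nonneg_left (inv_sq_add_sq_le hl _) ((abs_nonneg _).trans (hB t)))
  have hφgψ : Integrable fun t => φ' t • g t • ψ t := by
    simp only [smul_smul]
    exact integrable_smul_of_abs_le hψ (hφ'c.mul hgc).measurable
      fun t => abs_mul_regInv_le hl (φ' t)
  have hmain : ∫ t, ‖ψ t - φ' t • g t • ψ t‖ = l ^ 2 * ∫ t, (φ' t ^ 2 + l ^ 2)⁻¹ * ‖ψ t‖ := by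
    simp only [g, norm_sub_smul_regInv_smul hl, integral_const_mul]
  have hderiv : ∫ t, ‖g t • deriv ψ t + deriv g t • ψ t‖ ≤
      (2 * l)⁻¹ * (∫ t, ‖deriv ψ t‖) + B * ∫ t, (φ' t ^ 2 + l ^ 2)⁻¹ * ‖ψ t‖ := by
    rw [← integral_const_mul, ← integral_const_mul,
      ← integral_add (hψ'.norm.const_mul _) (hkψ.const_mul _)]
    refine integral_mono (hgψ'.add hg'ψ).norm ((hψ'.norm.const_mul _).add (hkψ.const_mul _))
      fun t => (norm_add_le _ _).trans ?_
    rw [norm_smul, norm_smul, ← mul_assoc B]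
    gcongr
    exacts [hg_le t, hg'_le t]
  have hbound := norm_integral_cexp_I_mul_smul_le hφ hψ
    (fun t => (hgd t).differentiableAt.hasDerivAt.smul (hψd t).hasDerivAt)
    (integrable_smul_of_abs_le hψ hgc.measurable hg_le) (hgψ'.add hg'ψ) hφgψ
  linarith [hbound.trans (add_le_add hmain.le hderiv)]

end NonstationaryPhase

section QuadraticPhase

variable {E : Type*} [NormedAddCommGroup E] {ψ : ℝ → E}

-- If `|2xt - y| < l² / 2`, then `l² = |x| + |y|` forces `l² / 2 ≤ (1 + 2|t|)|x|`.
lemma inv_sq_add_sq_le_of_sq_eq {l x y : ℝ} (hl : 0 < l) (hxy : l ^ 2 = |x| + |y|) (t : ℝ) :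
    ((2 * x * t - y) ^ 2 + l ^ 2)⁻¹ ≤
      (l ^ 3)⁻¹ + 4 * (l ^ 2)⁻¹ * (1 + |t|) * (|x| * ((2 * x * t - y) ^ 2 + l ^ 2)⁻¹) := by
  rcases le_or_gt (l ^ 2 / 2) |2 * x * t - y| with hfar | hnear
  · have hcube : l ^ 3 ≤ (2 * x * t - y) ^ 2 + l ^ 2 := calc
      l ^ 3 = 2 * (l ^ 2 / 2) * l := by ring
      _ ≤ 2 * |2 * x * t - y| * l := by gcongr
      _ ≤ |2 * x * t - y| ^ 2 + l ^ 2 := two_mul_le_add_sq _ _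
      _ = (2 * x * t - y) ^ 2 + l ^ 2 := by rw [sq_abs]
    have : ((2 * x * t - y) ^ 2 + l ^ 2)⁻¹ ≤ (l ^ 3)⁻¹ := by gcongr
    exact this.trans (le_add_of_nonneg_right (by positivity))
  · have hy : |y| ≤ 2 * |x| * |t| + |2 * x * t - y| := by
      have := abs_sub (2 * x * t) (2 * x * t - y)
      rwa [sub_sub_cancel, abs_mul, abs_mul, abs_two] at this
    have hone : 1 ≤ 4 * (l ^ 2)⁻¹ * (1 + |t|) * |x| := by
      rw [mul_right_comm 4, mul_right_comm _ (l ^ 2)⁻¹, ← div_eq_mul_inv,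
        one_le_div (by positivity)]
      linarith [abs_nonneg x]
    rw [← mul_assoc]
    exact (le_mul_of_one_le_left (by positivity) hone).trans
      (le_add_of_nonneg_left (by positivity))

lemma integral_inv_sq_add_sq_mul_norm_le {l x y M : ℝ} (hl : 0 < l) (hxy : l ^ 2 = |x| + |y|)
    (hψ : Integrable ψ) (hM : ∀ t, (1 + |t|) * ‖ψ t‖ ≤ M) :
    ∫ t, ((2 * x * t - y) ^ 2 + l ^ 2)⁻¹ * ‖ψ t‖ ≤ ((∫ t, ‖ψ t‖) + 2 * π * M) / l ^ 3 := by
  have hint := integrable_abs_mul_inv_sq_add_sq hl x y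
  have hM0 : 0 ≤ M := le_trans (by positivity) (hM 0)
  have hpointwise (t : ℝ) : ((2 * x * t - y) ^ 2 + l ^ 2)⁻¹ * ‖ψ t‖ ≤
      (l ^ 3)⁻¹ * ‖ψ t‖ + 4 * (l ^ 2)⁻¹ * M * (|x| * ((2 * x * t - y) ^ 2 + l ^ 2)⁻¹) := by
    set k := ((2 * x * t - y) ^ 2 + l ^ 2)⁻¹
    calc k * ‖ψ t‖ ≤ ((l ^ 3)⁻¹ + 4 * (l ^ 2)⁻¹ * (1 + |t|) * (|x| * k)) * ‖ψ t‖ := by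
          gcongr; exact inv_sq_add_sq_le_of_sq_eq hl hxy t
      _ = (l ^ 3)⁻¹ * ‖ψ t‖ + 4 * (l ^ 2)⁻¹ * ((1 + |t|) * ‖ψ t‖) * (|x| * k) := by ring
      _ ≤ _ := by gcongr; exact hM t
  calc ∫ t, ((2 * x * t - y) ^ 2 + l ^ 2)⁻¹ * ‖ψ t‖
      ≤ ∫ t, ((l ^ 3)⁻¹ * ‖ψ t‖ +
          4 * (l ^ 2)⁻¹ * M * (|x| * ((2 * x * t - y) ^ 2 + l ^ 2)⁻¹)) :=
        integral_mono_of_nonneg (.of_forall fun t => by positivity)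
          ((hψ.norm.const_mul _).add (hint.const_mul _)) (.of_forall hpointwise)
    _ = (l ^ 3)⁻¹ * (∫ t, ‖ψ t‖) +
          4 * (l ^ 2)⁻¹ * M * ∫ t, |x| * ((2 * x * t - y) ^ 2 + l ^ 2)⁻¹ := by
        rw [integral_add (hψ.norm.const_mul _) (hint.const_mul _), integral_const_mul,
          integral_const_mul]
    _ ≤ (l ^ 3)⁻¹ * (∫ t, ‖ψ t‖) + 4 * (l ^ 2)⁻¹ * M * (π / (2 * l)) := by
        gcongr; exact integral_abs_mul_inv_sq_add_sq_le hl x y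
    _ = ((∫ t, ‖ψ t‖) + 2 * π * M) / l ^ 3 := by field_simp; ring

variable [NormedSpace ℂ E]

lemma norm_integral_cexp_quadratic_smul_le {l x y M : ℝ} (hl : 0 < l)
    (hxy : l ^ 2 = |x| + |y|) (hψd : Differentiable ℝ ψ) (hψ : Integrable ψ)
    (hψ' : Integrable (deriv ψ)) (hM : ∀ t, (1 + |t|) * ‖ψ t‖ ≤ M) :
    ‖∫ t : ℝ, cexp (I * ((x * t ^ 2 - y * t : ℝ) : ℂ)) • ψ t‖ ≤
      (3 * ((∫ t, ‖ψ t‖) + 2 * π * M) + ∫ t, ‖deriv ψ t‖) / l := by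
  have hφ (t : ℝ) : HasDerivAt (fun t => x * t ^ 2 - y * t) (2 * x * t - y) t := by
    refine (((hasDerivAt_pow 2 t).const_mul x).sub ((hasDerivAt_id t).const_mul y)).congr_deriv ?_
    push_cast
    ring
  have hφ' (t : ℝ) : HasDerivAt (fun t => 2 * x * t - y) (2 * x) t := by
    simpa only [mul_one] using ((hasDerivAt_id' t).const_mul (2 * x)).sub_const y
  have hφ''_le : |2 * x| ≤ 2 * l ^ 2 := by
    rw [abs_mul, abs_two, hxy]
    linarith [abs_nonneg y]
  calc ‖∫ t : ℝ, cexp (I * ((x * t ^ 2 - y * t : ℝ) : ℂ)) • ψ t‖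
      ≤ (l ^ 2 + 2 * l ^ 2) * (∫ t, ((2 * x * t - y) ^ 2 + l ^ 2)⁻¹ * ‖ψ t‖) +
          (2 * l)⁻¹ * ∫ t, ‖deriv ψ t‖ :=
        norm_integral_cexp_I_mul_smul_le_of_abs_deriv2_le hl hφ hφ' (fun _ => hφ''_le) hψd hψ hψ'
    _ ≤ (l ^ 2 + 2 * l ^ 2) * (((∫ t, ‖ψ t‖) + 2 * π * M) / l ^ 3) +
          l⁻¹ * ∫ t, ‖deriv ψ t‖ := by
        gcongr
        · exact integral_inv_sq_add_sq_mul_norm_le hl hxy hψ hM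
        · exact le_mul_of_one_le_left hl.le one_le_two
    _ = (3 * ((∫ t, ‖ψ t‖) + 2 * π * M) + ∫ t, ‖deriv ψ t‖) / l := by field_simp; ring

/-- The paper's oscillatory integral `H(x, y) = ∫ e^{2πi(xt² - yt)} ψ(t) dt` of an amplitude `ψ`;
`H_j` is the case of the amplitude `ψ_j(t) = 2^{-j} ψ(2^{-j} t)`. -/
def oscIntegral (ψ : ℝ → E) (x y : ℝ) : E :=
  ∫ t : ℝ, cexp (I * ((2 * π * (x * t ^ 2 - y * t) : ℝ) : ℂ)) • ψ t

lemma oscIntegral_dilation (ψ : ℝ → E) {a : ℝ} (ha : 0 < a) (x y : ℝ) :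
    oscIntegral (fun t => a⁻¹ • ψ (a⁻¹ * t)) x y = oscIntegral ψ (a ^ 2 * x) (a * y) := by
  have hphase (t : ℝ) : x * t ^ 2 - y * t =
      a ^ 2 * x * (a⁻¹ * t) ^ 2 - a * y * (a⁻¹ * t) := by field_simp
  simp only [oscIntegral, hphase, smul_comm _ a⁻¹]
  rw [integral_smul, Measure.integral_comp_mul_left (fun t : ℝ =>
    cexp (I * ((2 * π * (a ^ 2 * x * t ^ 2 - a * y * t) : ℝ) : ℂ)) • ψ t) a⁻¹, inv_inv,
    abs_of_pos ha, inv_smul_smul₀ ha.ne']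

lemma norm_oscIntegral_le_of_integral_eq_zero (hψ : Integrable ψ)
    (hmoment : Integrable fun t => t ^ 2 * ‖ψ t‖) (hmean : ∫ t, ψ t = 0) (x y : ℝ) :
    ‖oscIntegral ψ x y‖ ≤ 2 * π * (∫ t, (1 + t ^ 2) * ‖ψ t‖) * (|x| + |y|) := by
  have hweight : Integrable fun t => (1 + t ^ 2) * ‖ψ t‖ := by
    simp only [add_mul, one_mul]
    exact hψ.norm.add hmoment
  have hcancel : oscIntegral ψ x y =
      ∫ t, (cexp (I * ((2 * π * (x * t ^ 2 - y * t) : ℝ) : ℂ)) - 1) • ψ t := by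
    simp only [sub_smul, one_smul]
    rw [integral_sub (integrable_cexp_I_mul_smul (by fun_prop) hψ) hψ, hmean, sub_zero, oscIntegral]
  have hphase (t : ℝ) : |x * t ^ 2 - y * t| ≤ (|x| + |y|) * (1 + t ^ 2) := calc
    |x * t ^ 2 - y * t| ≤ |x * t ^ 2| + |y * t| := abs_sub _ _
    _ = |x| * t ^ 2 + |y| * |t| := by rw [abs_mul, abs_mul, abs_sq]
    _ ≤ |x| * (1 + t ^ 2) + |y| * (1 + t ^ 2) := by
      gcongr
      · exact le_add_of_nonneg_left zero_le_one
      · rw [← sq_abs t]; nlinarith [sq_nonneg (|t| - 1), abs_nonneg t]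
    _ = (|x| + |y|) * (1 + t ^ 2) := by ring
  rw [hcancel, mul_right_comm, ← integral_const_mul]
  refine norm_integral_le_of_norm_le (hweight.const_mul _) (.of_forall fun t => ?_)
  rw [norm_smul, ← mul_assoc]
  gcongr
  calc ‖cexp (I * ((2 * π * (x * t ^ 2 - y * t) : ℝ) : ℂ)) - 1‖
      ≤ |2 * π * (x * t ^ 2 - y * t)| := norm_exp_I_mul_ofReal_sub_one_le
    _ = 2 * π * |x * t ^ 2 - y * t| := by rw [abs_mul, abs_of_pos two_pi_pos]
    _ ≤ 2 * π * ((|x| + |y|) * (1 + t ^ 2)) := by gcongr; exact hphase t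
    _ = 2 * π * (|x| + |y|) * (1 + t ^ 2) := (mul_assoc _ _ _).symm

lemma norm_oscIntegral_le_div_sqrt {M x y : ℝ} (hψd : Differentiable ℝ ψ) (hψ : Integrable ψ)
    (hψ' : Integrable (deriv ψ)) (hM : ∀ t, (1 + |t|) * ‖ψ t‖ ≤ M) (hxy : 0 < |x| + |y|) :
    ‖oscIntegral ψ x y‖ ≤
      (3 * ((∫ t, ‖ψ t‖) + 2 * π * M) + ∫ t, ‖deriv ψ t‖) / √(|x| + |y|) := by
  have hM0 : 0 ≤ M := le_trans (by positivity) (hM 0)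
  have hscale : |2 * π * x| + |2 * π * y| = 2 * π * (|x| + |y|) := by
    rw [abs_mul, abs_mul _ y, abs_of_pos two_pi_pos, mul_add]
  have hl_sq : √(2 * π * (|x| + |y|)) ^ 2 = |2 * π * x| + |2 * π * y| := by
    rw [Real.sq_sqrt (by positivity), hscale]
  have hl_le : √(|x| + |y|) ≤ √(2 * π * (|x| + |y|)) :=
    Real.sqrt_le_sqrt (le_mul_of_one_le_left hxy.le (by linarith [pi_gt_three]))
  have hphase (t : ℝ) : 2 * π * (x * t ^ 2 - y * t) = 2 * π * x * t ^ 2 - 2 * π * y * t := by ring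
  simp only [oscIntegral, hphase]
  refine (norm_integral_cexp_quadratic_smul_le (by positivity) hl_sq hψd hψ hψ' hM).trans ?_
  gcongr

end QuadraticPhase

section Main

variable {E : Type*} [NormedAddCommGroup E] [NormedSpace ℂ E] {ψ : ℝ → E}

theorem stmt6_general (hψd : Differentiable ℝ ψ) (hψ : Integrable ψ)
    (hψ' : Integrable (deriv ψ)) (hmoment : Integrable fun t => t ^ 2 * ‖ψ t‖)
    (hdecay : ∃ M, ∀ t, (1 + |t|) * ‖ψ t‖ ≤ M) (hmean : ∫ t, ψ t = 0) :
    ∃ C : ℝ, 0 < C ∧ ∀ a : ℝ, 0 < a → ∀ x y : ℝ,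
      ‖oscIntegral (fun t => a⁻¹ • ψ (a⁻¹ * t)) x y‖ ≤
        C * min (a ^ 2 * |x| + a * |y|) ((a ^ 2 * |x| + a * |y|) ^ (-(1 / 2 : ℝ))) := by
  obtain ⟨M, hM⟩ := hdecay
  have hM0 : 0 ≤ M := le_trans (by positivity) (hM 0)
  set A := 2 * π * ∫ t, (1 + t ^ 2) * ‖ψ t‖
  set B := 3 * ((∫ t, ‖ψ t‖) + 2 * π * M) + ∫ t, ‖deriv ψ t‖
  have hA : 0 ≤ A := by positivity
  have hB : 0 ≤ B := by positivity
  refine ⟨A + B + 1, by positivity, fun a ha x y => ?_⟩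
  have hN : a ^ 2 * |x| + a * |y| = |a ^ 2 * x| + |a * y| := by
    rw [abs_mul, abs_mul, abs_of_pos ha, abs_of_pos (pow_pos ha 2)]
  rw [oscIntegral_dilation ψ ha, hN]
  have hsmall := norm_oscIntegral_le_of_integral_eq_zero hψ hmoment hmean (a ^ 2 * x) (a * y)
  have hN0 : 0 ≤ |a ^ 2 * x| + |a * y| := by positivity
  rcases hN0.eq_or_lt with hN_zero | hN_pos
  · rw [← hN_zero, mul_zero] at hsmall
    rwa [← hN_zero, Real.zero_rpow (by norm_num), min_self, mul_zero]
  · have hlarge := norm_oscIntegral_le_div_sqrt hψd hψ hψ' hM hN_pos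
    rw [Real.rpow_neg hN0, ← Real.sqrt_eq_rpow, mul_min_of_nonneg _ _ (by positivity), le_min_iff,
      ← div_eq_mul_inv]
    have hA_le : A ≤ A + B + 1 := by linarith
    have hB_le : B ≤ A + B + 1 := by linarith
    exact ⟨hsmall.trans (by gcongr), hlarge.trans (by gcongr)⟩

lemma integral_eq_zero_of_odd {f : ℝ → ℝ} (hf : f.Odd) : ∫ t, f t = 0 := by
  have h := integral_neg_eq_self f volume
  simp only [hf _, integral_neg] at h
  linarith

theorem exists_norm_oscIntegral_le_of_hasCompactSupport (hψ : ContDiff ℝ 1 ψ)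
    (hsupp : HasCompactSupport ψ) (hmean : ∫ t, ψ t = 0) :
    ∃ C : ℝ, 0 < C ∧ ∀ a : ℝ, 0 < a → ∀ x y : ℝ,
      ‖oscIntegral (fun t => a⁻¹ • ψ (a⁻¹ * t)) x y‖ ≤
        C * min (a ^ 2 * |x| + a * |y|) ((a ^ 2 * |x| + a * |y|) ^ (-(1 / 2 : ℝ))) := by
  have hψc := hψ.continuous
  refine stmt6_general (hψ.differentiable one_ne_zero) (hψc.integrable_of_hasCompactSupport hsupp)
    ((hψ.continuous_deriv le_rfl).integrable_of_hasCompactSupport hsupp.deriv)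
    (Continuous.integrable_of_hasCompactSupport (by fun_prop) hsupp.norm.mul_left) ?_ hmean
  obtain ⟨M, hM⟩ := (hsupp.norm.mul_left (f := fun t => 1 + |t|)).exists_bound_of_continuous
    (by fun_prop)
  exact ⟨M, fun t => (le_abs_self _).trans (hM t)⟩

end Main

/-- Oscillatory estimate (e:Hj<): with `H_j(x,y) = ∫ e(xt² - yt) ψ_j(t) dt` and
`‖(x,y)‖_j = 2^{2j}|x| + 2^j|y|`, one has
`|H_j(x,y)| ≲ min{‖(x,y)‖_j, ‖(x,y)‖_j^{-1/2}}` uniformly in `j` and `(x,y)`. -/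
theorem stmt6 (ψ : ℝ → ℝ) (hψ : ContDiff ℝ (⊤ : ℕ∞) ψ) (hodd : ∀ x, ψ (-x) = -ψ x)
    (hsupp : ∀ x, ψ x ≠ 0 → 1 / 4 ≤ |x| ∧ |x| ≤ 1) :
    ∃ C : ℝ, 0 < C ∧ ∀ (j : ℕ) (x y : ℝ),
      ‖∫ t : ℝ, Complex.exp (Complex.I * ((2 * π * (x * t ^ 2 - y * t) : ℝ) : ℂ)) *
          (((2 : ℝ) ^ (-(j : ℤ)) * ψ ((2 : ℝ) ^ (-(j : ℤ)) * t) : ℝ) : ℂ)‖ ≤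
        C * min ((2 : ℝ) ^ (2 * j) * |x| + 2 ^ j * |y|)
          (((2 : ℝ) ^ (2 * j) * |x| + 2 ^ j * |y|) ^ (-(1 / 2 : ℝ))) := by
  obtain ⟨C, hC, h⟩ := exists_norm_oscIntegral_le_of_hasCompactSupport
    (ψ := fun t => (ψ t : ℂ)) (ofRealCLM.contDiff.comp (hψ.of_le (by simp)))
    (HasCompactSupport.intro (isCompact_Icc (a := -1) (b := 1)) fun t ht => by
      rw [ofReal_eq_zero]
      by_contra hψt
      exact ht (abs_le.1 (hsupp t hψt).2))
    (by rw [integral_complex_ofReal, integral_eq_zero_of_odd hodd, ofReal_zero])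
  refine ⟨C, hC, fun j x y => ?_⟩
  simpa [oscIntegral, pow_mul'] using h (2 ^ j) (by positivity) x y
end
end

section
/- Let ψ be smooth, odd, supported in {1/4 ≤ |x| ≤ 1}, ψ_k(t) = 2^{-k}ψ(2^{-k}t). Fix integers k and l ≤ 0 and λ with 1 ≤ λ 2^{2k-l} < 2. Let φ be Schwartz with 1_{[-1/8,1/8]} ≤ φ̂ ≤ 1_{[-1/4,1/4]}, φ_k(t) = 2^{-k}φ(2^{-k}t), μ(k,λ,l) = ∫ e^{2πiλt²}ψ_k(t)dt, and φ_{k,λ,l}(t) = e^{2πiλt²}ψ_k(t) − μ(k,λ,l) φ_k(t). Then the Fourier transform satisfies |φ̂_{k,λ,l}(ξ)| ≲ min{ 2^k|ξ|, (2^k|ξ|)^{-1} } for all ξ ∈ ℝ. -/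
open Real FourierTransform

noncomputable section

/-!
Rescaling by `2 ^ k` reduces the estimate to scale one, with frequency `a = lam * 2 ^ (2 * k)`
bounded because `l ≤ 0`. There `g = e(as²)ψ - μφ` has mean zero, as `∫ φ = φ̂(0) = 1`.
Hence `ĝ(ξ) = ĝ(ξ) - ĝ(0)` is at most `2π|ξ| ∫ |s| ‖g s‖`, while one integration by parts bounds
`2π|ξ| ‖ĝ(ξ)‖` by `∫ ‖g'‖`. Both integrals grow at most linearly in `|a|`, since differentiating
the chirp produces the factor `4πas`.
-/

open MeasureTheory

section Fourier

variable {V E : Type*} [NormedAddCommGroup V] [InnerProductSpace ℝ V] [MeasurableSpace V]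
  [BorelSpace V] [FiniteDimensional ℝ V] [NormedAddCommGroup E] [NormedSpace ℂ E]

theorem norm_fourierChar_sub_one_le (x : ℝ) : ‖(𝐞 x : ℂ) - 1‖ ≤ 2 * π * |x| := by
  rw [Real.fourierChar_apply, mul_comm]
  refine Real.norm_exp_I_mul_ofReal_sub_one_le.trans_eq ?_
  rw [norm_eq_abs, abs_mul, abs_of_pos two_pi_pos]

theorem norm_fourier_sub_integral_le {f : V → E} (hf : Integrable f)
    (hmoment : Integrable fun v => ‖v‖ * ‖f v‖) (w : V) :
    ‖𝓕 f w - ∫ v, f v‖ ≤ 2 * π * ‖w‖ * ∫ v, ‖v‖ * ‖f v‖ := by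
  have hchar : Integrable fun v => 𝐞 (-inner ℝ v w) • f v :=
    (Real.fourierIntegral_convergent_iff w).2 hf
  rw [Real.fourier_eq, ← integral_sub hchar hf, ← integral_const_mul]
  refine norm_integral_le_of_norm_le (hmoment.const_mul _) (.of_forall fun v => ?_)
  calc ‖𝐞 (-inner ℝ v w) • f v - f v‖
      = ‖(𝐞 (-inner ℝ v w) : ℂ) - 1‖ * ‖f v‖ := by
        rw [← norm_smul, sub_smul, one_smul, Circle.smul_def]
    _ ≤ 2 * π * (‖v‖ * ‖w‖) * ‖f v‖ := by
        gcongr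
        refine (norm_fourierChar_sub_one_le _).trans ?_
        rw [abs_neg]
        gcongr
        exact abs_real_inner_le_norm v w
    _ = 2 * π * ‖w‖ * (‖v‖ * ‖f v‖) := by ring

theorem two_pi_mul_abs_mul_norm_fourier_le {f : ℝ → E} (hf : Integrable f)
    (hdiff : Differentiable ℝ f) (hderiv : Integrable (deriv f)) (ξ : ℝ) :
    2 * π * |ξ| * ‖𝓕 f ξ‖ ≤ ∫ s, ‖deriv f s‖ :=
  calc 2 * π * |ξ| * ‖𝓕 f ξ‖ = ‖𝓕 (deriv f) ξ‖ := by
        rw [Real.fourier_deriv hf hdiff hderiv, norm_smul]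
        simp [abs_of_pos pi_pos]
    _ ≤ ∫ s, ‖deriv f s‖ :=
        VectorFourier.norm_fourierIntegral_le_integral_norm _ _ _ _ _

end Fourier

section Dilate

variable {E : Type*} [NormedAddCommGroup E] [NormedSpace ℂ E]

/-- The `L¹`-normalised dilation of `f` to scale `r`; the paper's `ψ_k` is `dilate (2 ^ k) ψ`. -/
def dilate (r : ℝ) (f : ℝ → E) (t : ℝ) : E := r⁻¹ • f (r⁻¹ * t)

variable {r : ℝ}

theorem integral_dilate (hr : 0 < r) (f : ℝ → E) : ∫ t, dilate r f t = ∫ t, f t := by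
  simp only [dilate]
  rw [integral_smul, Measure.integral_comp_inv_mul_left, abs_of_pos hr, inv_smul_smul₀ hr.ne']

theorem fourier_dilate (hr : 0 < r) (f : ℝ → E) (ξ : ℝ) :
    𝓕 (dilate r f) ξ = 𝓕 f (r * ξ) := by
  rw [Real.fourier_real_eq, Real.fourier_real_eq,
    ← integral_dilate hr fun v => 𝐞 (-(v * (r * ξ))) • f v]
  congr with t
  have hphase : r⁻¹ * t * (r * ξ) = t * ξ := by field_simp
  rw [dilate, dilate, hphase, smul_comm]

end Dilate

section MomentSobolev

variable {E : Type*} [NormedAddCommGroup E] [NormedSpace ℂ E] {f g : ℝ → E}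

/-- Differentiable functions in `W^{1,1}(ℝ)` with finite first absolute moment: the regularity
and decay which, together with mean zero, make `min |ξ| |ξ|⁻¹` dominate the Fourier transform. -/
structure MomentSobolev (f : ℝ → E) : Prop where
  differentiable : Differentiable ℝ f
  integrable : Integrable f
  integrable_smul : Integrable fun s : ℝ => s • f s
  integrable_deriv : Integrable (deriv f)

/-- The seminorm on `MomentSobolev` functions controlling their Fourier transform, with the first
moment weighted by the `2π` of the phase `e(-sξ)`. -/
def momentSobolevNorm (f : ℝ → E) : ℝ := 2 * π * (∫ s, |s| * ‖f s‖) + ∫ s, ‖deriv f s‖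

theorem momentSobolevNorm_nonneg (f : ℝ → E) : 0 ≤ momentSobolevNorm f := by
  unfold momentSobolevNorm
  positivity

theorem momentSobolevNorm_const_smul (c : ℂ) (hf : Differentiable ℝ f) :
    momentSobolevNorm (fun s => c • f s) = ‖c‖ * momentSobolevNorm f := by
  simp only [momentSobolevNorm, deriv_fun_const_smul c (hf _), norm_smul, mul_left_comm _ ‖c‖,
    integral_const_mul, mul_add]

theorem momentSobolev_of_hasCompactSupport (hf : ContDiff ℝ 1 f) (hsupp : HasCompactSupport f) :
    MomentSobolev f where
  differentiable := hf.differentiable one_ne_zero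
  integrable := hf.continuous.integrable_of_hasCompactSupport hsupp
  integrable_smul :=
    (continuous_id.smul hf.continuous).integrable_of_hasCompactSupport hsupp.smul_left
  integrable_deriv := (hf.continuous_deriv le_rfl).integrable_of_hasCompactSupport hsupp.deriv

theorem momentSobolev_schwartzMap (f : SchwartzMap ℝ E) : MomentSobolev f where
  differentiable := f.differentiable
  integrable := f.integrable
  integrable_smul :=
    (f.integrable_pow_mul volume 1).mono' (by fun_prop)
      (.of_forall fun s => by rw [norm_smul, pow_one])
  integrable_deriv := (SchwartzMap.derivCLM ℝ E f).integrable

theorem MomentSobolev.integrable_moment (hf : MomentSobolev f) :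
    Integrable fun s => |s| * ‖f s‖ := by
  simpa only [norm_smul, norm_eq_abs] using hf.integrable_smul.norm

theorem MomentSobolev.const_smul (c : ℂ) (hf : MomentSobolev f) :
    MomentSobolev fun s => c • f s where
  differentiable := hf.differentiable.const_smul c
  integrable := hf.integrable.smul c
  integrable_smul := by simpa only [smul_comm c] using hf.integrable_smul.fun_smul c
  integrable_deriv := (hf.integrable_deriv.smul c).congr
    (.of_forall fun s => (deriv_fun_const_smul c (hf.differentiable s)).symm)

theorem MomentSobolev.sub (hf : MomentSobolev f) (hg : MomentSobolev g) :
    MomentSobolev fun s => f s - g s where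
  differentiable := hf.differentiable.sub hg.differentiable
  integrable := hf.integrable.sub hg.integrable
  integrable_smul := by
    simpa only [smul_sub] using! hf.integrable_smul.sub hg.integrable_smul
  integrable_deriv := (hf.integrable_deriv.sub hg.integrable_deriv).congr
    (.of_forall fun s => (deriv_fun_sub (hf.differentiable s) (hg.differentiable s)).symm)

theorem momentSobolevNorm_sub_le (hf : MomentSobolev f) (hg : MomentSobolev g) :
    momentSobolevNorm (fun s => f s - g s) ≤ momentSobolevNorm f + momentSobolevNorm g := by
  have hmoment : ∫ s, |s| * ‖f s - g s‖ ≤ (∫ s, |s| * ‖f s‖) + ∫ s, |s| * ‖g s‖ := by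
    rw [← integral_add hf.integrable_moment hg.integrable_moment]
    refine integral_mono (hf.sub hg).integrable_moment
      (hf.integrable_moment.add hg.integrable_moment) fun s => ?_
    simp only [← mul_add]
    gcongr
    exact norm_sub_le _ _
  have hderiv : ∫ s, ‖deriv (fun s => f s - g s) s‖ ≤
      (∫ s, ‖deriv f s‖) + ∫ s, ‖deriv g s‖ := by
    rw [← integral_add hf.integrable_deriv.norm hg.integrable_deriv.norm]
    refine integral_mono (hf.sub hg).integrable_deriv.norm
      (hf.integrable_deriv.norm.add hg.integrable_deriv.norm) fun s => ?_
    rw [deriv_fun_sub (hf.differentiable s) (hg.differentiable s)]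
    exact norm_sub_le _ _
  unfold momentSobolevNorm
  linear_combination 2 * π * hmoment + hderiv

theorem MomentSobolev.norm_fourier_le (hf : MomentSobolev f) (hmean : ∫ s, f s = 0) (ξ : ℝ) :
    ‖𝓕 f ξ‖ ≤ momentSobolevNorm f * min |ξ| |ξ|⁻¹ := by
  have hlow : ‖𝓕 f ξ‖ ≤ 2 * π * |ξ| * ∫ s, |s| * ‖f s‖ := by
    simpa only [hmean, sub_zero, norm_eq_abs] using
      norm_fourier_sub_integral_le hf.integrable hf.integrable_moment ξ
  have hhigh : 2 * π * |ξ| * ‖𝓕 f ξ‖ ≤ ∫ s, ‖deriv f s‖ :=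
    two_pi_mul_abs_mul_norm_fourier_le hf.integrable hf.differentiable hf.integrable_deriv ξ
  have hmoment : 0 ≤ ∫ s, |s| * ‖f s‖ := by positivity
  have hderiv : 0 ≤ ∫ s, ‖deriv f s‖ := by positivity
  rw [mul_min_of_nonneg _ _ (momentSobolevNorm_nonneg f), le_min_iff, momentSobolevNorm]
  constructor
  · linear_combination hlow + |ξ| * hderiv
  · obtain rfl | hξ := eq_or_ne ξ 0
    · simpa using hlow
    · rw [← div_eq_mul_inv, le_div_iff₀ (abs_pos.2 hξ)]
      have hpi : 1 ≤ 2 * π := by linarith [pi_gt_three]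
      calc ‖𝓕 f ξ‖ * |ξ| ≤ 2 * π * (‖𝓕 f ξ‖ * |ξ|) := le_mul_of_one_le_left (by positivity) hpi
        _ ≤ 2 * π * (∫ s, |s| * ‖f s‖) + ∫ s, ‖deriv f s‖ := by
          linear_combination hhigh + 2 * π * hmoment

end MomentSobolev

section Chirp

/-- The quadratic phase `e(at²) = exp(2πiat²)`. -/
def chirp (a t : ℝ) : ℂ := Complex.exp (Complex.I * ((2 * π * (a * t ^ 2) : ℝ) : ℂ))

theorem norm_chirp (a t : ℝ) : ‖chirp a t‖ = 1 := Complex.norm_exp_I_mul_ofReal _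

theorem hasDerivAt_chirp (a t : ℝ) :
    HasDerivAt (chirp a) (chirp a t * (4 * π * Complex.I * a * t)) t := by
  have hphase : HasDerivAt (fun t : ℝ => 2 * π * (a * t ^ 2)) (2 * π * (a * (2 * t))) t := by
    simpa using ((hasDerivAt_pow 2 t).const_mul a).const_mul (2 * π)
  refine (hphase.ofReal_comp.const_mul Complex.I).cexp.congr_deriv ?_
  rw [chirp]
  push_cast
  ring

theorem differentiable_chirp (a : ℝ) : Differentiable ℝ (chirp a) :=
  fun t => (hasDerivAt_chirp a t).differentiableAt

theorem chirp_inv_mul {r : ℝ} (hr : r ≠ 0) (a t : ℝ) :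
    chirp (a * r ^ 2) (r⁻¹ * t) = chirp a t := by
  have hphase : a * r ^ 2 * (r⁻¹ * t) ^ 2 = a * t ^ 2 := by field_simp
  rw [chirp, hphase, chirp]

variable {E : Type*} [NormedAddCommGroup E] [NormedSpace ℂ E] {f : ℝ → E}

theorem norm_chirp_smul (a t : ℝ) (v : E) : ‖chirp a t • v‖ = ‖v‖ := by
  rw [norm_smul, norm_chirp, one_mul]

theorem integrable_chirp_smul (a : ℝ) (hf : Integrable f) :
    Integrable fun s => chirp a s • f s :=
  hf.bdd_smul 1 (differentiable_chirp a).continuous.aestronglyMeasurable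
    (.of_forall fun s => (norm_chirp a s).le)

theorem deriv_chirp_smul (a : ℝ) (hf : Differentiable ℝ f) :
    deriv (fun s => chirp a s • f s) =
      fun s => chirp a s • (deriv f s + (4 * π * Complex.I * a : ℂ) • s • f s) := by
  ext s
  rw [deriv_fun_smul (differentiable_chirp a s) (hf s), (hasDerivAt_chirp a s).deriv, smul_add,
    mul_smul, mul_smul, Complex.coe_smul]

theorem MomentSobolev.chirp_smul (a : ℝ) (hf : MomentSobolev f) :
    MomentSobolev fun s => chirp a s • f s where
  differentiable := (differentiable_chirp a).smul hf.differentiable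
  integrable := integrable_chirp_smul a hf.integrable
  integrable_smul := by
    simpa only [smul_comm (chirp _ _)] using integrable_chirp_smul a hf.integrable_smul
  integrable_deriv := by
    rw [deriv_chirp_smul a hf.differentiable]
    exact integrable_chirp_smul a (hf.integrable_deriv.add (hf.integrable_smul.smul _))

theorem momentSobolevNorm_chirp_smul_le (a : ℝ) (hf : MomentSobolev f) :
    momentSobolevNorm (fun s => chirp a s • f s) ≤ (1 + 2 * |a|) * momentSobolevNorm f := by
  have hderiv : ∫ s, ‖deriv (fun s => chirp a s • f s) s‖ ≤
      (∫ s, ‖deriv f s‖) + 4 * π * |a| * ∫ s, |s| * ‖f s‖ := by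
    rw [← integral_const_mul, ← integral_add hf.integrable_deriv.norm
      (hf.integrable_moment.const_mul _)]
    refine integral_mono (hf.chirp_smul a).integrable_deriv.norm
      (hf.integrable_deriv.norm.add (hf.integrable_moment.const_mul _)) fun s => ?_
    simp only [deriv_chirp_smul a hf.differentiable, norm_chirp_smul]
    refine (norm_add_le _ _).trans_eq ?_
    simp [norm_smul, abs_of_pos pi_pos]
  have hderiv_nonneg : 0 ≤ ∫ s, ‖deriv f s‖ := by positivity
  simp only [momentSobolevNorm, norm_chirp_smul]
  linear_combination hderiv + 2 * |a| * hderiv_nonneg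

end Chirp

section CorrectedChirp

/-- The chirp `e(at²)ψ(t)` minus the multiple of `φ` that gives it mean zero when `∫ φ = 1`;
the paper's `φ_{k,λ,l}` is `correctedChirp λ (dilate (2 ^ k) ψ) (dilate (2 ^ k) φ)`. -/
def correctedChirp (a : ℝ) (ψ φ : ℝ → ℂ) (t : ℝ) : ℂ :=
  chirp a t • ψ t - (∫ s, chirp a s • ψ s) • φ t

theorem correctedChirp_dilate {r : ℝ} (hr : 0 < r) (a : ℝ) (ψ φ : ℝ → ℂ) :
    correctedChirp a (dilate r ψ) (dilate r φ) =
      dilate r (correctedChirp (a * r ^ 2) ψ φ) := by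
  have hchirp (t : ℝ) : chirp a t • dilate r ψ t =
      dilate r (fun s => chirp (a * r ^ 2) s • ψ s) t := by
    rw [dilate, dilate, chirp_inv_mul hr.ne', smul_comm]
  ext t
  simp only [correctedChirp, hchirp, integral_dilate hr]
  simp only [dilate, correctedChirp, smul_sub, smul_comm r⁻¹ (∫ s, chirp (a * r ^ 2) s • ψ s)]

variable {ψ φ : ℝ → ℂ}

theorem integral_correctedChirp (a : ℝ) (hψ : Integrable ψ) (hφ : Integrable φ)
    (hmass : ∫ s, φ s = 1) : ∫ s, correctedChirp a ψ φ s = 0 := by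
  simp only [correctedChirp]
  rw [integral_sub (integrable_chirp_smul a hψ) (hφ.fun_smul _), integral_smul, hmass,
    smul_eq_mul, mul_one, sub_self]

theorem momentSobolev_correctedChirp (a : ℝ) (hψ : MomentSobolev ψ) (hφ : MomentSobolev φ) :
    MomentSobolev (correctedChirp a ψ φ) :=
  (hψ.chirp_smul a).sub (hφ.const_smul _)

theorem momentSobolevNorm_correctedChirp_le (a : ℝ) (hψ : MomentSobolev ψ)
    (hφ : MomentSobolev φ) :
    momentSobolevNorm (correctedChirp a ψ φ) ≤
      (1 + 2 * |a|) * momentSobolevNorm ψ + (∫ s, ‖ψ s‖) * momentSobolevNorm φ := by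
  have hμ : ‖∫ s, chirp a s • ψ s‖ ≤ ∫ s, ‖ψ s‖ := by
    simpa only [norm_chirp_smul] using
      norm_integral_le_integral_norm fun s => chirp a s • ψ s
  refine (momentSobolevNorm_sub_le (hψ.chirp_smul a) (hφ.const_smul _)).trans ?_
  rw [momentSobolevNorm_const_smul _ hφ.differentiable]
  gcongr
  · exact momentSobolevNorm_chirp_smul_le a hψ
  · exact momentSobolevNorm_nonneg φ

theorem norm_fourier_correctedChirp_dilate_le {r : ℝ} (hr : 0 < r) (a : ℝ)
    (hψ : MomentSobolev ψ) (hφ : MomentSobolev φ) (hmass : ∫ s, φ s = 1) (ξ : ℝ) :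
    ‖𝓕 (correctedChirp a (dilate r ψ) (dilate r φ)) ξ‖ ≤
      ((1 + 2 * |a * r ^ 2|) * momentSobolevNorm ψ + (∫ s, ‖ψ s‖) * momentSobolevNorm φ) *
        min (r * |ξ|) (r * |ξ|)⁻¹ := by
  have habs : |r * ξ| = r * |ξ| := by rw [abs_mul, abs_of_pos hr]
  rw [correctedChirp_dilate hr, fourier_dilate hr, ← habs]
  refine ((momentSobolev_correctedChirp _ hψ hφ).norm_fourier_le
    (integral_correctedChirp _ hψ.integrable hφ.integrable hmass) _).trans ?_
  gcongr
  exact momentSobolevNorm_correctedChirp_le _ hψ hφ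

theorem stmt12_general (hψ : MomentSobolev ψ) (hφ : MomentSobolev φ) (hmass : ∫ s, φ s = 1)
    (M : ℝ) :
    ∃ C : ℝ, 0 < C ∧ ∀ r a : ℝ, 0 < r → |a * r ^ 2| ≤ M → ∀ ξ : ℝ,
      ‖𝓕 (correctedChirp a (dilate r ψ) (dilate r φ)) ξ‖ ≤
        C * min (r * |ξ|) (r * |ξ|)⁻¹ := by
  have hψ0 := momentSobolevNorm_nonneg ψ
  have hφ0 := momentSobolevNorm_nonneg φ
  refine ⟨(1 + 2 * |M|) * momentSobolevNorm ψ + (∫ s, ‖ψ s‖) * momentSobolevNorm φ + 1,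
    by positivity, fun r a hr ha ξ => ?_⟩
  refine (norm_fourier_correctedChirp_dilate_le hr a hψ hφ hmass ξ).trans ?_
  refine mul_le_mul_of_nonneg_right ?_ (by positivity)
  have ha' : |a * r ^ 2| ≤ |M| := ha.trans (le_abs_self M)
  calc (1 + 2 * |a * r ^ 2|) * momentSobolevNorm ψ + (∫ s, ‖ψ s‖) * momentSobolevNorm φ
      ≤ (1 + 2 * |M|) * momentSobolevNorm ψ + (∫ s, ‖ψ s‖) * momentSobolevNorm φ := by
        gcongr
    _ ≤ _ := le_add_of_nonneg_right zero_le_one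

end CorrectedChirp

theorem momentSobolev_ofReal {ψ : ℝ → ℝ} {R : ℝ} (hψ : ContDiff ℝ 1 ψ)
    (hsupp : ∀ x, ψ x ≠ 0 → |x| ≤ R) : MomentSobolev fun x => (ψ x : ℂ) := by
  refine momentSobolev_of_hasCompactSupport (Complex.ofRealCLM.contDiff.comp hψ)
    (.intro (isCompact_Icc (a := -R) (b := R)) fun x hx => ?_)
  by_contra hψx
  exact hx (abs_le.1 (hsupp x (Complex.ofReal_ne_zero.1 hψx)))

theorem integral_eq_one_of_fourier_zero {f : ℝ → ℂ} (hre : 1 ≤ (𝓕 f 0).re)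
    (hnorm : ‖𝓕 f 0‖ ≤ 1) : ∫ s, f s = 1 := by
  have hre_eq : (𝓕 f 0).re = 1 := ((Complex.re_le_norm _).trans hnorm).antisymm hre
  have him : (𝓕 f 0).im = 0 :=
    Complex.abs_re_eq_norm.1 <| (Complex.abs_re_le_norm _).antisymm <|
      hnorm.trans (hre.trans (le_abs_self _))
  have hfourier : 𝓕 f 0 = 1 := Complex.ext hre_eq him
  simpa [Real.fourier_real_eq] using hfourier

theorem abs_mul_two_zpow_sq_le {k l : ℤ} {a M : ℝ} (hl : l ≤ 0) (ha : 0 ≤ a)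
    (h : a * 2 ^ (2 * k - l) ≤ M) : |a * ((2 : ℝ) ^ k) ^ 2| ≤ M := by
  rw [abs_of_nonneg (by positivity), ← zpow_natCast, ← zpow_mul]
  refine le_trans ?_ h
  gcongr
  · exact one_le_two
  · push_cast
    lia

/-- Estimate (e:EST1) for `l ≤ 0`: with `φ_{k,λ,l}(t) = e(λt²)ψ_k(t) - μ(k,λ,l) φ_k(t)`,
one has `|φ̂_{k,λ,l}(ξ)| ≲ min{2^k|ξ|, (2^k|ξ|)⁻¹}`. -/
theorem stmt12 (ψ : ℝ → ℝ) (hψ : ContDiff ℝ (⊤ : ℕ∞) ψ) (hodd : ∀ x, ψ (-x) = -ψ x)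
    (hsupp : ∀ x, ψ x ≠ 0 → 1 / 4 ≤ |x| ∧ |x| ≤ 1)
    (φ : SchwartzMap ℝ ℂ)
    (hφre : ∀ ξ : ℝ,
      Set.indicator (Set.Icc (-(1 / 8) : ℝ) (1 / 8)) (fun _ => 1) ξ ≤ (𝓕 ⇑φ ξ).re)
    (hφim : ∀ ξ : ℝ, (𝓕 ⇑φ ξ).im = 0)
    (hφbd : ∀ ξ : ℝ,
      ‖𝓕 ⇑φ ξ‖ ≤ Set.indicator (Set.Icc (-(1 / 4) : ℝ) (1 / 4)) (fun _ => 1) ξ) :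
    ∃ C : ℝ, 0 < C ∧ ∀ (k l : ℤ) (lam : ℝ), l ≤ 0 → 0 < lam →
      1 ≤ lam * 2 ^ (2 * k - l) → lam * 2 ^ (2 * k - l) < 2 →
      ∀ ξ : ℝ,
      ‖𝓕 (fun t : ℝ =>
          Complex.exp (Complex.I * ((2 * π * (lam * t ^ 2) : ℝ) : ℂ)) *
            (((2 : ℝ) ^ (-k) * ψ ((2 : ℝ) ^ (-k) * t) : ℝ) : ℂ)
          - (∫ s : ℝ, Complex.exp (Complex.I * ((2 * π * (lam * s ^ 2) : ℝ) : ℂ)) *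
              (((2 : ℝ) ^ (-k) * ψ ((2 : ℝ) ^ (-k) * s) : ℝ) : ℂ))
            * (((2 : ℝ) ^ (-k) : ℝ) : ℂ) * φ ((2 : ℝ) ^ (-k) * t)) ξ‖ ≤
        C * min ((2 : ℝ) ^ k * |ξ|) (((2 : ℝ) ^ k * |ξ|)⁻¹) := by
  obtain ⟨C, hC, hbound⟩ := stmt12_general
    (momentSobolev_ofReal (hψ.of_le (by simp)) fun x hx => (hsupp x hx).2)
    (momentSobolev_schwartzMap φ)
    (integral_eq_one_of_fourier_zero (by simpa using hφre 0) (by simpa using hφbd 0)) 2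
  unfold correctedChirp at hbound
  exact ⟨C, hC, fun k l lam hl hlam _ hlt ξ => by
    simpa only [chirp, dilate, zpow_neg, smul_eq_mul, Complex.real_smul, Complex.ofReal_mul,
      mul_assoc] using
      hbound (2 ^ k) lam (by positivity) (abs_mul_two_zpow_sq_le hl hlam.le hlt.le) ξ⟩
end
end

section
/- Fix 0 < ε < 1/7 and an integer j ≥ 1. Let 𝔐_j = ⋃_{(A,B,Q)=1, Q ≤ 2^{6jε}} {(λ,β) ∈ 𝕋² : |λ − A/Q| ≤ 2^{(ε−2)j}, |β − B/Q| ≤ 2^{(ε−1)j}}. Then there is δ = δ(ε) > 0 such that for all (λ,β) ∉ 𝔐_j, the sum M_j(λ,β) = ∑_{m∈ℤ} e^{2πi(λm² − βm)} ψ_j(m) satisfies |M_j(λ,β)| ≲ 2^{−δj}, where ψ_j(t) = 2^{−j}ψ(2^{−j}t) with ψ smooth and supported in {1/4 ≤ |x| ≤ 1}. -/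
open Real

noncomputable section

/-!
Weyl differencing bounds the square of the unnormalized sum by linear exponential sums with
frequencies `2λh`, so a sum of size at least `N / T`, where `N` is its length and `T` a small power
of `N`, forces `2λh` to lie within `O(T² / N)` of an integer for a proportion `≳ T⁻²` of the shifts
`h`. Pigeonholing such `h` at two scales puts `λ` within `O(T⁶ / N²)` of a fraction `A / Q` with
`Q = O(T²)`. The remaining chirp `e((λ - A / Q) m²)` varies slowly and is absorbed into the weight,
while the shift `m ↦ m + Q` multiplies the sum with frequency `A / Q` by `e(-Qβ)`, up to a small
error. So the sum can only be large if `Qβ` is close to an integer `B`, which puts `(λ, β)` into the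
major arc of `(A / Q, B / Q)`.
-/

section FiniteSupport

open scoped Finset Pointwise ComplexConjugate

lemma norm_tsum_le_card_mul {ι E : Type*} [SeminormedAddCommGroup E] {v : ι → E}
    {S : Finset ι} {B : ℝ} (hv : v.support ⊆ S) (hB : ∀ i ∈ S, ‖v i‖ ≤ B) :
    ‖∑' i, v i‖ ≤ #S * B := by
  rw [tsum_eq_sum' hv]
  exact (norm_sum_le_of_le S hB).trans_eq (by rw [Finset.sum_const, nsmul_eq_mul])

variable {G : Type*} [AddCommGroup G] {S : Finset G} {u : G → ℂ}

lemma norm_one_sub_mul_norm_tsum_le (hu : u.support ⊆ S) (g : G) (z : ℂ) {B : ℝ}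
    (hB : ∀ x, ‖u (x + g) - z * u x‖ ≤ B) :
    ‖1 - z‖ * ‖∑' x, u x‖ ≤ 2 * #S * B := by
  classical
  have hu₀ : ∀ x ∉ S, u x = 0 := Function.support_subset_iff'.mp hu
  have hsum : Summable u := summable_of_hasFiniteSupport (S.finite_toSet.subset hu)
  have hsum_shift : Summable fun x => u (x + g) := (Equiv.addRight g).summable_iff.mpr hsum
  have hfactor : (1 - z) * ∑' x, u x = ∑' x, (u (x + g) - z * u x) := by
    rw [hsum_shift.tsum_sub (hsum.mul_left z), tsum_mul_left,
      show ∑' x, u (x + g) = ∑' x, u x from (Equiv.addRight g).tsum_eq u]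
    ring
  have hsupp : (Function.support fun x => u (x + g) - z * u x) ⊆ ↑(S ∪ S.image (· - g)) := by
    refine Function.support_subset_iff'.mpr fun x hx => ?_
    simp only [Finset.mem_coe, Finset.mem_union, Finset.mem_image, sub_eq_iff_eq_add,
      exists_eq_right, not_or] at hx
    rw [hu₀ _ hx.1, hu₀ _ hx.2, mul_zero, sub_zero]
  have hcard : #(S ∪ S.image (· - g)) ≤ 2 * #S :=
    (Finset.card_union_le _ _).trans <| by
      rw [two_mul]; exact Nat.add_le_add_left Finset.card_image_le _
  calc ‖1 - z‖ * ‖∑' x, u x‖ = ‖∑' x, (u (x + g) - z * u x)‖ := by rw [← norm_mul, hfactor]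
    _ ≤ #(S ∪ S.image (· - g)) * B := norm_tsum_le_card_mul hsupp fun x _ => hB x
    _ ≤ 2 * #S * B := by
        refine mul_le_mul_of_nonneg_right ?_ ((norm_nonneg _).trans (hB 0))
        exact_mod_cast hcard

lemma norm_tsum_sq_le_sum_norm_autocorrelation [DecidableEq G] (hu : u.support ⊆ S) :
    ‖∑' x, u x‖ ^ 2 ≤ ∑ h ∈ S - S, ‖∑' x, u (x + h) * conj (u x)‖ := by
  have hu₀ : ∀ x ∉ S, u x = 0 := Function.support_subset_iff'.mp hu
  have htranslate : ∀ x ∈ S, ∑' y, u y = ∑ h ∈ S - S, u (x + h) := fun x hx => by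
    rw [← (Equiv.addLeft x).tsum_eq u]
    refine tsum_eq_sum fun h hh => hu₀ _ fun hxh => hh ?_
    simpa using Finset.sub_mem_sub hxh hx
  have hcorr : ∀ h, ∑' x, u (x + h) * conj (u x) = ∑ x ∈ S, u (x + h) * conj (u x) :=
    fun h => tsum_eq_sum fun x hx => by rw [hu₀ x hx, map_zero, mul_zero]
  have hexpand : (∑' x, u x) * conj (∑' x, u x)
      = ∑ h ∈ S - S, ∑' x, u (x + h) * conj (u x) := by
    calc (∑' x, u x) * conj (∑' x, u x) = ∑ x ∈ S, (∑' y, u y) * conj (u x) := by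
          nth_rw 2 [tsum_eq_sum' hu]
          rw [map_sum, Finset.mul_sum]
      _ = ∑ x ∈ S, ∑ h ∈ S - S, u (x + h) * conj (u x) :=
          Finset.sum_congr rfl fun x hx => by rw [htranslate x hx, Finset.sum_mul]
      _ = ∑ h ∈ S - S, ∑' x, u (x + h) * conj (u x) := by
          rw [Finset.sum_comm]
          exact Finset.sum_congr rfl fun h _ => (hcorr h).symm
  calc ‖∑' x, u x‖ ^ 2 = ‖(∑' x, u x) * conj (∑' x, u x)‖ := by
        rw [norm_mul, RCLike.norm_conj, sq]
    _ ≤ ∑ h ∈ S - S, ‖∑' x, u (x + h) * conj (u x)‖ := by rw [hexpand]; exact norm_sum_le _ _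

end FiniteSupport

section FourierChar

open scoped FourierTransform

lemma fourierChar_intCast (n : ℤ) : 𝐞 (n : ℝ) = 1 := by
  rw [fourierChar_apply']
  exact Circle.exp_two_pi_mul_int n

lemma norm_fourierChar_sub_le (x y : ℝ) : ‖(𝐞 x : ℂ) - 𝐞 y‖ ≤ 2 * π * |x - y| := by
  have hfactor : (𝐞 x : ℂ) - 𝐞 y = 𝐞 y * (𝐞 (x - y) - 1) := by
    rw [mul_sub, ← Circle.coe_mul, ← AddChar.map_add_eq_mul, add_sub_cancel, mul_one]
  rw [hfactor, norm_mul, Circle.norm_coe, one_mul, fourierChar_apply, mul_comm _ Complex.I]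
  refine norm_exp_I_mul_ofReal_sub_one_le.trans_eq ?_
  rw [Real.norm_eq_abs, abs_mul, abs_of_pos two_pi_pos]

lemma four_mul_norm_coe_le_norm_one_sub_fourierChar (t : ℝ) :
    4 * ‖(t : UnitAddCircle)‖ ≤ ‖1 - (𝐞 t : ℂ)‖ := by
  set s := t - round t with hs
  have hperiod : 𝐞 t = 𝐞 s := by
    rw [← sub_add_cancel t (round t : ℝ), AddChar.map_add_eq_mul, fourierChar_intCast, mul_one]
  have hjordan : 2 / π * |π * s| ≤ |sin (π * s)| := by
    refine mul_abs_le_abs_sin ?_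
    rw [abs_mul, abs_of_pos pi_pos]
    linarith [mul_le_mul_of_nonneg_left (abs_sub_round t) pi_pos.le]
  calc 4 * ‖(t : UnitAddCircle)‖ = 2 * (2 / π * |π * s|) := by
        rw [UnitAddCircle.norm_eq, ← hs, abs_mul, abs_of_pos pi_pos]
        field_simp
        ring
    _ ≤ 2 * |sin (π * s)| := by gcongr
    _ = ‖1 - (𝐞 t : ℂ)‖ := by
        rw [hperiod, norm_sub_rev, fourierChar_apply, mul_comm _ Complex.I,
          Complex.norm_exp_I_mul_ofReal_sub_one, show 2 * π * s / 2 = π * s by ring,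
          Real.norm_eq_abs, abs_mul, abs_two]

end FourierChar

section Recurrence

open scoped Finset

/-- The rank-one Bohr set of the `n ∈ [-M, M]` for which `nξ` is within `δ` of an integer; the
distance of `x : ℝ` to the nearest integer is encoded as `‖(x : UnitAddCircle)‖`. -/
def bohrSet (ξ δ : ℝ) (M : ℕ) : Finset ℤ :=
  {n ∈ Finset.Icc (-M : ℤ) M | ‖((n * ξ : ℝ) : UnitAddCircle)‖ ≤ δ}

lemma exists_le_sub_lt_of_mul_lt_card {A : Finset ℤ} {c : ℤ} {M b k : ℕ}
    (hA : A ⊆ Finset.Ico c (c + M)) (hb : 0 < b) (hcard : (M / b + 1) * k < #A) :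
    ∃ x ∈ A, ∃ y ∈ A, k ≤ y - x ∧ y - x < b := by
  have hmaps : ∀ a ∈ A, (a - c).toNat / b ∈ Finset.range (M / b + 1) := fun a ha => by
    have := Finset.mem_Ico.mp (hA ha)
    exact Finset.mem_range.mpr (Nat.lt_succ_of_le (Nat.div_le_div_right (by lia)))
  obtain ⟨i, -, hi⟩ := Finset.exists_lt_card_fiber_of_mul_lt_card_of_maps_to hmaps
    (by rwa [Finset.card_range])
  set P := A.filter fun a => (a - c).toNat / b = i
  have hne : P.Nonempty := Finset.card_pos.mp (by lia)
  obtain ⟨hxA, hxi⟩ := Finset.mem_filter.mp (P.min'_mem hne)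
  obtain ⟨hyA, hyi⟩ := Finset.mem_filter.mp (P.max'_mem hne)
  refine ⟨_, hxA, _, hyA, ?_, ?_⟩
  · have hspread : #P ≤ #(Finset.Icc (P.min' hne) (P.max' hne)) := Finset.card_le_card fun a ha =>
      Finset.mem_Icc.mpr ⟨P.min'_le a ha, P.le_max' a ha⟩
    rw [Int.card_Icc] at hspread
    lia
  · have hxc := Finset.mem_Ico.mp (hA hxA)
    have hyc := Finset.mem_Ico.mp (hA hyA)
    have hx := Nat.div_add_mod (P.min' hne - c).toNat b
    have hy := Nat.div_add_mod (P.max' hne - c).toNat b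
    have := Nat.mod_lt (P.max' hne - c).toNat hb
    rw [hxi] at hx
    rw [hyi] at hy
    lia

lemma exists_sub_mem_Icc_of_div_lt_card {A : Finset ℤ} {c : ℤ} {M : ℕ} {L W : ℝ}
    (hA : A ⊆ Finset.Ico c (c + M)) (hL : 0 < L) (hLW : L ≤ W) (hWM : W ≤ M)
    (hcard : 4 * M / L < #A) :
    ∃ x ∈ A, ∃ y ∈ A, ((y - x : ℤ) : ℝ) ∈ Set.Icc (W / L) W := by
  have hW : 0 < W := hL.trans_le hLW
  have hblocks : ((M / (⌊W⌋₊ + 1) : ℕ) + 1 : ℝ) ≤ 2 * (M / W) := by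
    have hdiv : ((M / (⌊W⌋₊ + 1) : ℕ) : ℝ) ≤ M / W := Nat.cast_div_le.trans <| by
      gcongr
      exact_mod_cast (Nat.lt_floor_add_one W).le
    linarith [(one_le_div hW).mpr hWM]
  have hceil : (⌈W / L⌉₊ : ℝ) ≤ 2 * (W / L) := by
    linarith [Nat.ceil_lt_add_one (div_nonneg hW.le hL.le), (one_le_div hL).mpr hLW]
  have hpigeon : ((M / (⌊W⌋₊ + 1) : ℕ) + 1 : ℝ) * ⌈W / L⌉₊ < #A := by
    calc ((M / (⌊W⌋₊ + 1) : ℕ) + 1 : ℝ) * ⌈W / L⌉₊ ≤ 2 * (M / W) * (2 * (W / L)) := by gcongr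
      _ = 4 * M / L := by field_simp; ring
      _ < #A := hcard
  obtain ⟨x, hx, y, hy, hle, hlt⟩ :=
    exists_le_sub_lt_of_mul_lt_card hA (Nat.succ_pos ⌊W⌋₊) (by exact_mod_cast hpigeon)
  refine ⟨x, hx, y, hy, (Nat.le_ceil _).trans (by exact_mod_cast hle), ?_⟩
  calc ((y - x : ℤ) : ℝ) ≤ ⌊W⌋₊ := by exact_mod_cast Int.lt_add_one_iff.mp (by exact_mod_cast hlt)
    _ ≤ W := Nat.floor_le hW.le

lemma exists_abs_mul_sub_le_of_div_lt_card_bohrSet {ξ δ L W : ℝ} {M : ℕ} (hL : 0 < L)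
    (hLW : L ≤ W) (hWM : W ≤ M) (hcard : 12 * M / L < #(bohrSet ξ δ M)) :
    ∃ (d : ℕ) (a : ℤ), W / L ≤ d ∧ d ≤ W ∧ |d * ξ - a| ≤ 2 * δ := by
  have hM : 0 < M := by exact_mod_cast (hL.trans_le hLW).trans_le hWM
  have hsub : bohrSet ξ δ M ⊆ Finset.Ico (-M : ℤ) (-M + (3 * M : ℕ)) := fun n hn => by
    have := Finset.mem_Icc.mp (Finset.mem_filter.mp hn).1
    exact Finset.mem_Ico.mpr (by lia)
  obtain ⟨x, hx, y, hy, hle, hge⟩ := exists_sub_mem_Icc_of_div_lt_card hsub hL hLW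
    (by push_cast; linarith) (by push_cast; convert hcard using 1; ring)
  have hd : (((y - x).toNat : ℕ) : ℝ) = (y - x : ℤ) := by
    have : 0 < y - x := by exact_mod_cast (div_pos (hL.trans_le hLW) hL).trans_le hle
    exact_mod_cast Int.toNat_of_nonneg this.le
  refine ⟨(y - x).toNat, round ((y - x : ℤ) * ξ), by rwa [hd], by rwa [hd], ?_⟩
  rw [hd, ← UnitAddCircle.norm_eq]
  calc ‖(((y - x : ℤ) * ξ : ℝ) : UnitAddCircle)‖
      = ‖((y * ξ : ℝ) : UnitAddCircle) - ((x * ξ : ℝ) : UnitAddCircle)‖ := by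
        rw [← AddCircle.coe_sub, ← sub_mul, Int.cast_sub]
    _ ≤ δ + δ := (norm_sub_le _ _).trans
        (add_le_add (Finset.mem_filter.mp hy).2 (Finset.mem_filter.mp hx).2)
    _ = 2 * δ := (two_mul δ).symm

-- Differences at the two scales `L` and `1 / (8δ)` give approximations `a / q` and `b / h` of `ξ`;
-- they are so close that they coincide, and the large `h` makes `b / h` the accurate one.
lemma exists_rat_approx_of_div_lt_card_bohrSet {ξ δ L : ℝ} {M : ℕ} (hL : 1 ≤ L) (hδ : 0 < δ)
    (hδM : 1 ≤ 8 * δ * M) (hδL : 8 * δ * L ≤ 1) (hcard : 12 * M / L < #(bohrSet ξ δ M)) :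
    ∃ (a : ℤ) (q : ℕ), 0 < q ∧ q ≤ L ∧ |ξ - a / q| ≤ 16 * δ ^ 2 * L := by
  have hL₀ : 0 < L := by linarith
  set H := 1 / (8 * δ) with hH
  have hLH : L ≤ H := by rw [hH, le_div_iff₀ (by positivity)]; linarith
  have hHM : H ≤ M := by rw [hH, div_le_iff₀ (by positivity)]; linarith
  obtain ⟨q, a, hq, hqL, hqa⟩ :=
    exists_abs_mul_sub_le_of_div_lt_card_bohrSet hL₀ le_rfl (hLH.trans hHM) hcard
  obtain ⟨h, b, hh, hhH, hhb⟩ :=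
    exists_abs_mul_sub_le_of_div_lt_card_bohrSet hL₀ hLH hHM hcard
  rw [div_self hL₀.ne'] at hq
  have hq₀ : (0 : ℝ) < q := by linarith
  have hh₀ : (0 : ℝ) < h := (by positivity : 0 < H / L).trans_le hh
  have hcross : a * h = b * q := by
    have hlt : |((a * h - b * q : ℤ) : ℝ)| < 1 := by
      calc |((a * h - b * q : ℤ) : ℝ)| = |q * (h * ξ - b) - h * (q * ξ - a)| := by
            push_cast; congr 1; ring
        _ ≤ |q * (h * ξ - b)| + |h * (q * ξ - a)| := abs_sub _ _
        _ = q * |h * ξ - b| + h * |q * ξ - a| := by simp only [abs_mul, Nat.abs_cast]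
        _ ≤ L * (2 * δ) + H * (2 * δ) := by gcongr
        _ ≤ 1 / 4 + 1 / 4 := by
            have : H * (2 * δ) = 1 / 4 := by rw [hH]; field_simp; norm_num
            linarith
        _ < 1 := by norm_num
    exact sub_eq_zero.mp (Int.abs_lt_one_iff.mp (by exact_mod_cast hlt))
  have hfrac : ξ - a / q = (h * ξ - b) / h := by
    have : (a : ℝ) * h = b * q := by exact_mod_cast hcross
    field_simp
    linear_combination -this
  refine ⟨a, q, by exact_mod_cast hq₀, hqL, ?_⟩
  rw [hfrac, abs_div, Nat.abs_cast, div_le_iff₀ hh₀]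
  calc |h * ξ - b| ≤ 2 * δ := hhb
    _ = 16 * δ ^ 2 * L * (H / L) := by rw [hH]; field_simp; norm_num
    _ ≤ 16 * δ ^ 2 * L * h := by gcongr

end Recurrence

section QuadraticSums

open scoped Finset Pointwise FourierTransform ComplexConjugate

/-- The weighted quadratic exponential sum `∑ m, e(lam m² - β m) w m`, where `e(x) = exp(2πix)`. -/
def quadExpSum (w : ℤ → ℂ) (lam β : ℝ) : ℂ :=
  ∑' m : ℤ, (𝐞 (lam * m ^ 2 - β * m) : ℂ) * w m

/-- A weight of size `K` living at scale `N`, as obtained by sampling a Lipschitz bump at the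
points `m / N`. The class is stable under the operations of the circle method: multiplication by
a slow chirp and Weyl differencing. -/
structure IsSlowlyVarying (w : ℤ → ℂ) (N : ℕ) (K : ℝ) : Prop where
  pos : 0 < N
  support_subset : w.support ⊆ Finset.Icc (-N : ℤ) N
  norm_le : ∀ m, ‖w m‖ ≤ K
  norm_succ_sub_le : ∀ m, ‖w (m + 1) - w m‖ ≤ K / N

lemma support_fourierChar_mul_subset (φ : ℤ → ℝ) (w : ℤ → ℂ) :
    (Function.support fun m => (𝐞 (φ m) : ℂ) * w m) ⊆ w.support :=
  Function.support_mul_subset_right _ w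

lemma fourierChar_quadratic_add_denom (a : ℤ) {q : ℕ} (hq : 0 < q) (β : ℝ) (m : ℤ) :
    (𝐞 ((a / q : ℝ) * (m + q : ℤ) ^ 2 - β * (m + q : ℤ)) : ℂ)
      = 𝐞 (-(q * β)) * 𝐞 ((a / q : ℝ) * m ^ 2 - β * m) := by
  have hq₀ : (q : ℝ) ≠ 0 := by positivity
  have hphase : (a / q : ℝ) * (m + q : ℤ) ^ 2 - β * (m + q : ℤ)
      = -(q * β) + ((a / q : ℝ) * m ^ 2 - β * m) + (2 * a * m + a * q : ℤ) := by
    push_cast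
    field_simp
    ring
  rw [hphase, AddChar.map_add_eq_mul, fourierChar_intCast, mul_one, AddChar.map_add_eq_mul,
    Circle.coe_mul]

lemma norm_fourierChar_mul_sq_succ_sub_le (θ : ℝ) {N : ℕ} (hN : 0 < N) {m : ℤ}
    (hm : m ∈ Finset.Icc (-N : ℤ) N) :
    ‖(𝐞 (θ * (m + 1 : ℤ) ^ 2) : ℂ) - 𝐞 (θ * m ^ 2)‖ ≤ 19 * |θ| * N := by
  have hm' : |(2 * m + 1 : ℝ)| ≤ 3 * N := by
    have : |2 * m + 1| ≤ 3 * (N : ℤ) := by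
      rw [Finset.mem_Icc] at hm
      rw [abs_le]; lia
    exact_mod_cast this
  calc ‖(𝐞 (θ * (m + 1 : ℤ) ^ 2) : ℂ) - 𝐞 (θ * m ^ 2)‖
      ≤ 2 * π * |θ * (m + 1 : ℤ) ^ 2 - θ * m ^ 2| := norm_fourierChar_sub_le _ _
    _ = 2 * π * (|θ| * |(2 * m + 1 : ℝ)|) := by rw [← abs_mul]; push_cast; congr 2; ring
    _ ≤ 2 * 3.15 * (|θ| * (3 * N)) := by gcongr; exact pi_lt_d2.le
    _ ≤ 19 * |θ| * N := by nlinarith [mul_nonneg (abs_nonneg θ) N.cast_nonneg]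

lemma card_Icc_neg_le {N : ℕ} (hN : 0 < N) : (#(Finset.Icc (-N : ℤ) N) : ℝ) ≤ 3 * N := by
  have : #(Finset.Icc (-N : ℤ) N) ≤ 3 * N := by rw [Int.card_Icc]; lia
  exact_mod_cast this

namespace IsSlowlyVarying

variable {w : ℤ → ℂ} {N : ℕ} {K : ℝ}

lemma nonneg (hw : IsSlowlyVarying w N K) : 0 ≤ K := (norm_nonneg _).trans (hw.norm_le 0)

lemma norm_add_sub_le (hw : IsSlowlyVarying w N K) (m : ℤ) (q : ℕ) :
    ‖w (m + q) - w m‖ ≤ q * (K / N) := by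
  induction q with
  | zero => simp
  | succ q ih =>
    calc ‖w (m + (q + 1 : ℕ)) - w m‖
        = ‖(w (m + q + 1) - w (m + q)) + (w (m + q) - w m)‖ := by
          rw [sub_add_sub_cancel, Nat.cast_succ, add_assoc]
      _ ≤ K / N + q * (K / N) := norm_add_le_of_le (hw.norm_succ_sub_le _) ih
      _ = (q + 1 : ℕ) * (K / N) := by push_cast; ring

lemma mul_conj_shift (hw : IsSlowlyVarying w N K) (h : ℤ) :
    IsSlowlyVarying (fun n => w (n + h) * conj (w n)) N (2 * K ^ 2) where
  pos := hw.pos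
  support_subset := fun n hn =>
    hw.support_subset fun hn' => hn (by simp only [hn', map_zero, mul_zero])
  norm_le n := by
    rw [norm_mul, RCLike.norm_conj]
    nlinarith [mul_le_mul (hw.norm_le (n + h)) (hw.norm_le n) (norm_nonneg _) hw.nonneg,
      sq_nonneg K]
  norm_succ_sub_le n := by
    have hleibniz : w (n + 1 + h) * conj (w (n + 1)) - w (n + h) * conj (w n)
        = (w (n + h + 1) - w (n + h)) * conj (w (n + 1)) + w (n + h) * conj (w (n + 1) - w n) := by
      rw [add_right_comm, map_sub]; ring
    rw [hleibniz]
    calc ‖_‖ ≤ ‖w (n + h + 1) - w (n + h)‖ * ‖w (n + 1)‖ + ‖w (n + h)‖ * ‖w (n + 1) - w n‖ :=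
          (norm_add_le _ _).trans_eq (by simp only [norm_mul, RCLike.norm_conj])
      _ ≤ K / N * K + K * (K / N) := by
          have := hw.nonneg
          gcongr
          exacts [hw.norm_succ_sub_le _, hw.norm_le _, hw.norm_le _, hw.norm_succ_sub_le _]
      _ = 2 * K ^ 2 / N := by ring

lemma fourierChar_sq_mul (hw : IsSlowlyVarying w N K) (θ : ℝ) :
    IsSlowlyVarying (fun m => (𝐞 (θ * m ^ 2) : ℂ) * w m) N (K * (1 + 19 * |θ| * N ^ 2)) where
  pos := hw.pos
  support_subset := (support_fourierChar_mul_subset _ w).trans hw.support_subset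
  norm_le m := by
    rw [norm_mul, Circle.norm_coe, one_mul]
    exact (hw.norm_le m).trans (le_mul_of_one_le_right hw.nonneg
      (le_add_of_nonneg_right (by positivity)))
  norm_succ_sub_le m := by
    have hN : (0 : ℝ) < N := by exact_mod_cast hw.pos
    have hchirp : ‖(𝐞 (θ * (m + 1 : ℤ) ^ 2) : ℂ) - 𝐞 (θ * m ^ 2)‖ * ‖w m‖
        ≤ 19 * |θ| * N * K := by
      by_cases hm : m ∈ Finset.Icc (-N : ℤ) N
      swap
      · rw [Function.support_subset_iff'.mp hw.support_subset m hm, norm_zero, mul_zero]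
        have := hw.nonneg
        positivity
      exact mul_le_mul (norm_fourierChar_mul_sq_succ_sub_le θ hw.pos hm) (hw.norm_le m)
        (norm_nonneg _) (by positivity)
    calc ‖(𝐞 (θ * (m + 1 : ℤ) ^ 2) : ℂ) * w (m + 1) - 𝐞 (θ * m ^ 2) * w m‖
        = ‖(𝐞 (θ * (m + 1 : ℤ) ^ 2) : ℂ) * (w (m + 1) - w m)
            + (𝐞 (θ * (m + 1 : ℤ) ^ 2) - 𝐞 (θ * m ^ 2)) * w m‖ := by congr 1; ring
      _ ≤ K / N + 19 * |θ| * N * K := by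
          refine norm_add_le_of_le ?_ (by rwa [norm_mul])
          rw [norm_mul, Circle.norm_coe, one_mul]
          exact hw.norm_succ_sub_le m
      _ = K * (1 + 19 * |θ| * N ^ 2) / N := by field_simp

lemma norm_quadExpSum_le (hw : IsSlowlyVarying w N K) (lam β : ℝ) :
    ‖quadExpSum w lam β‖ ≤ 3 * N * K :=
  calc ‖quadExpSum w lam β‖ ≤ #(Finset.Icc (-N : ℤ) N) * K :=
        norm_tsum_le_card_mul ((support_fourierChar_mul_subset _ w).trans hw.support_subset)
          fun m _ => by rw [norm_mul, Circle.norm_coe, one_mul]; exact hw.norm_le m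
    _ ≤ 3 * N * K := mul_le_mul_of_nonneg_right (card_Icc_neg_le hw.pos) hw.nonneg

lemma norm_coe_mul_norm_quadExpSum_le (hw : IsSlowlyVarying w N K) (a : ℤ) {q : ℕ} (hq : 0 < q)
    (β : ℝ) : ‖((q * β : ℝ) : UnitAddCircle)‖ * ‖quadExpSum w (a / q) β‖ ≤ 2 * q * K := by
  have hN : (0 : ℝ) < N := by exact_mod_cast hw.pos
  have hK := hw.nonneg
  have hdiff : ‖1 - (𝐞 (-(q * β)) : ℂ)‖ * ‖quadExpSum w (a / q) β‖
      ≤ 2 * #(Finset.Icc (-N : ℤ) N) * (q * (K / N)) := by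
    refine norm_one_sub_mul_norm_tsum_le
      ((support_fourierChar_mul_subset _ w).trans hw.support_subset) (q : ℤ) _ fun m => ?_
    simp only [fourierChar_quadratic_add_denom a hq]
    calc ‖(𝐞 (-(q * β)) : ℂ) * 𝐞 ((a / q : ℝ) * m ^ 2 - β * m) * w (m + q)
          - 𝐞 (-(q * β)) * (𝐞 ((a / q : ℝ) * m ^ 2 - β * m) * w m)‖
        = ‖w (m + q) - w m‖ := by
          rw [mul_assoc, ← mul_sub, ← mul_sub, norm_mul, norm_mul, Circle.norm_coe,
            Circle.norm_coe, one_mul, one_mul]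
      _ ≤ q * (K / N) := hw.norm_add_sub_le m q
  have hjordan : 4 * ‖((q * β : ℝ) : UnitAddCircle)‖ ≤ ‖1 - (𝐞 (-(q * β)) : ℂ)‖ := by
    rw [← norm_neg, ← AddCircle.coe_neg]
    exact four_mul_norm_coe_le_norm_one_sub_fourierChar _
  have hbound : 4 * (‖((q * β : ℝ) : UnitAddCircle)‖ * ‖quadExpSum w (a / q) β‖) ≤ 6 * q * K := by
    calc 4 * (‖((q * β : ℝ) : UnitAddCircle)‖ * ‖quadExpSum w (a / q) β‖)
        ≤ ‖1 - (𝐞 (-(q * β)) : ℂ)‖ * ‖quadExpSum w (a / q) β‖ := by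
          rw [← mul_assoc]; gcongr
      _ ≤ 2 * #(Finset.Icc (-N : ℤ) N) * (q * (K / N)) := hdiff
      _ ≤ 2 * (3 * N) * (q * (K / N)) := by gcongr; exact card_Icc_neg_le hw.pos
      _ = 6 * q * K := by field_simp; ring
  have : 0 ≤ q * K := by positivity
  linarith

lemma norm_coe_mul_norm_quadExpSum_zero_le (hw : IsSlowlyVarying w N K) (β : ℝ) :
    ‖(β : UnitAddCircle)‖ * ‖quadExpSum w 0 β‖ ≤ 2 * K := by
  simpa using hw.norm_coe_mul_norm_quadExpSum_le 0 one_pos β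

end IsSlowlyVarying

lemma quadExpSum_add (w : ℤ → ℂ) (lam θ β : ℝ) :
    quadExpSum w (lam + θ) β = quadExpSum (fun m => (𝐞 (θ * m ^ 2) : ℂ) * w m) lam β := by
  refine tsum_congr fun m => ?_
  rw [← mul_assoc, ← Circle.coe_mul, ← AddChar.map_add_eq_mul]
  congr 3
  ring

lemma norm_tsum_weyl_difference (w : ℤ → ℂ) (lam β : ℝ) (h : ℤ) :
    ‖∑' n : ℤ, (𝐞 (lam * (n + h : ℤ) ^ 2 - β * (n + h : ℤ)) * w (n + h)) *
        conj (𝐞 (lam * n ^ 2 - β * n) * w n)‖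
      = ‖quadExpSum (fun n => w (n + h) * conj (w n)) 0 (-(h * (2 * lam)))‖ := by
  have hterm : ∀ n : ℤ, (𝐞 (lam * (n + h : ℤ) ^ 2 - β * (n + h : ℤ)) * w (n + h)) *
        conj (𝐞 (lam * n ^ 2 - β * n) * w n)
      = (𝐞 (lam * h ^ 2 - β * h) : ℂ) *
        (𝐞 (0 * (n : ℝ) ^ 2 - -(h * (2 * lam)) * n) * (w (n + h) * conj (w n))) := fun n => by
    have hphase : lam * (n + h : ℤ) ^ 2 - β * (n + h : ℤ) + -(lam * n ^ 2 - β * n)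
        = (lam * h ^ 2 - β * h) + (0 * (n : ℝ) ^ 2 - -(h * (2 * lam)) * n) := by
      push_cast; ring
    rw [map_mul, Circle.starRingEnd_addChar, mul_mul_mul_comm, ← Circle.coe_mul,
      ← AddChar.map_add_eq_mul, hphase, AddChar.map_add_eq_mul, Circle.coe_mul, mul_assoc]
  rw [tsum_congr hterm, tsum_mul_left, norm_mul, Circle.norm_coe, one_mul, quadExpSum]

namespace IsSlowlyVarying

variable {w : ℤ → ℂ} {N : ℕ} {K : ℝ}

lemma norm_quadExpSum_sq_le_sum (hw : IsSlowlyVarying w N K) (lam β : ℝ) :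
    ‖quadExpSum w lam β‖ ^ 2 ≤ ∑ h ∈ Finset.Icc (-(2 * N : ℕ) : ℤ) (2 * N : ℕ),
      ‖quadExpSum (fun n => w (n + h) * conj (w n)) 0 (-(h * (2 * lam)))‖ := by
  have hdifferences : Finset.Icc (-N : ℤ) N - Finset.Icc (-N : ℤ) N
      ⊆ Finset.Icc (-(2 * N : ℕ) : ℤ) (2 * N : ℕ) := fun h hh => by
    obtain ⟨x, hx, y, hy, rfl⟩ := Finset.mem_sub.mp hh
    rw [Finset.mem_Icc] at hx hy
    exact Finset.mem_Icc.mpr (by lia)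
  refine (norm_tsum_sq_le_sum_norm_autocorrelation
    ((support_fourierChar_mul_subset _ w).trans hw.support_subset)).trans ?_
  simp only [norm_tsum_weyl_difference]
  exact Finset.sum_le_sum_of_subset_of_nonneg hdifferences fun _ _ _ => norm_nonneg _

lemma norm_quadExpSum_sq_le (hw : IsSlowlyVarying w N K) (lam β : ℝ) {δ : ℝ} (hδ : 0 < δ) :
    ‖quadExpSum w lam β‖ ^ 2
      ≤ K ^ 2 * (6 * N * #(bohrSet (2 * lam) δ (2 * N)) + 24 * N / δ) := by
  set I := Finset.Icc (-(2 * N : ℕ) : ℤ) (2 * N : ℕ)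
  set R : ℤ → ℝ := fun h => ‖quadExpSum (fun n => w (n + h) * conj (w n)) 0 (-(h * (2 * lam)))‖
  have hclose : ∑ h ∈ bohrSet (2 * lam) δ (2 * N), R h
      ≤ #(bohrSet (2 * lam) δ (2 * N)) * (3 * N * (2 * K ^ 2)) := by
    rw [← nsmul_eq_mul]
    exact Finset.sum_le_card_nsmul _ _ _ fun h _ => (hw.mul_conj_shift h).norm_quadExpSum_le _ _
  have hterm_far : ∀ h ∈ I \ bohrSet (2 * lam) δ (2 * N), R h ≤ 2 * (2 * K ^ 2) / δ := by
    intro h hh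
    obtain ⟨hhI, hh_far⟩ := Finset.mem_sdiff.mp hh
    have hδh : δ < ‖((h * (2 * lam) : ℝ) : UnitAddCircle)‖ :=
      not_le.mp fun hle => hh_far (Finset.mem_filter.mpr ⟨hhI, hle⟩)
    have hgeom := (hw.mul_conj_shift h).norm_coe_mul_norm_quadExpSum_zero_le (-(h * (2 * lam)))
    rw [AddCircle.coe_neg, norm_neg] at hgeom
    rw [le_div_iff₀' hδ]
    exact (mul_le_mul_of_nonneg_right hδh.le (norm_nonneg _)).trans hgeom
  have hfar : ∑ h ∈ I \ bohrSet (2 * lam) δ (2 * N), R h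
      ≤ 3 * (2 * N : ℕ) * (2 * (2 * K ^ 2) / δ) := by
    refine (Finset.sum_le_card_nsmul _ _ _ hterm_far).trans ?_
    rw [nsmul_eq_mul]
    gcongr
    refine le_trans ?_ (card_Icc_neg_le (mul_pos two_pos hw.pos))
    exact_mod_cast Finset.card_le_card Finset.sdiff_subset
  calc ‖quadExpSum w lam β‖ ^ 2 ≤ ∑ h ∈ I, R h := hw.norm_quadExpSum_sq_le_sum lam β
    _ = ∑ h ∈ I \ bohrSet (2 * lam) δ (2 * N), R h + ∑ h ∈ bohrSet (2 * lam) δ (2 * N), R h :=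
        (Finset.sum_sdiff (Finset.filter_subset _ _)).symm
    _ ≤ _ := add_le_add hfar hclose
    _ = K ^ 2 * (6 * N * #(bohrSet (2 * lam) δ (2 * N)) + 24 * N / δ) := by push_cast; ring

lemma div_lt_card_bohrSet_of_lt_norm_quadExpSum (hw : IsSlowlyVarying w N K) {lam β T : ℝ}
    (hT : 0 < T) (hlarge : 13 * K * N / T < ‖quadExpSum w lam β‖) :
    12 * (2 * N : ℕ) / T ^ 2 < #(bohrSet (2 * lam) (T ^ 2 / N) (2 * N)) := by
  by_contra! hsparse
  have hN : (0 : ℝ) < N := by exact_mod_cast hw.pos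
  have hK := hw.nonneg
  have hsq : ‖quadExpSum w lam β‖ ^ 2 ≤ (13 * K * N / T) ^ 2 :=
    calc ‖quadExpSum w lam β‖ ^ 2
        ≤ K ^ 2 * (6 * N * #(bohrSet (2 * lam) (T ^ 2 / N) (2 * N)) + 24 * N / (T ^ 2 / N)) :=
          hw.norm_quadExpSum_sq_le lam β (by positivity)
      _ ≤ K ^ 2 * (6 * N * (12 * (2 * N : ℕ) / T ^ 2) + 24 * N / (T ^ 2 / N)) := by gcongr
      _ = 168 * (K * N / T) ^ 2 := by push_cast; field_simp; ring
      _ ≤ (13 * K * N / T) ^ 2 := by linarith [sq_nonneg (K * N / T),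
          show (13 * K * N / T) ^ 2 = 169 * (K * N / T) ^ 2 by ring]
  exact hlarge.not_ge (le_of_sq_le_sq hsq (by positivity))

lemma norm_quadExpSum_le_of_forall_lt_abs_sub (hw : IsSlowlyVarying w N K) {lam β s : ℝ} (a : ℤ)
    {q : ℕ} (hq : 0 < q) (hs : 0 < s) (hβ : ∀ b : ℤ, s < |β - b / q|) :
    ‖quadExpSum w lam β‖ ≤ 2 * (K * (1 + 19 * |lam - a / q| * N ^ 2)) / s := by
  have hq₀ : (0 : ℝ) < q := by exact_mod_cast hq
  have hdist : q * s ≤ ‖((q * β : ℝ) : UnitAddCircle)‖ := by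
    calc q * s ≤ q * |β - round (q * β) / q| := by gcongr; exact (hβ _).le
      _ = |q * (β - round (q * β) / q)| := by rw [abs_mul, Nat.abs_cast]
      _ = ‖((q * β : ℝ) : UnitAddCircle)‖ := by
          rw [UnitAddCircle.norm_eq, mul_sub, mul_div_cancel₀ _ hq₀.ne']
  have hrational := (hw.fourierChar_sq_mul (lam - a / q)).norm_coe_mul_norm_quadExpSum_le a hq β
  rw [← quadExpSum_add, add_sub_cancel] at hrational
  rw [le_div_iff₀' hs]
  refine le_of_mul_le_mul_left ?_ hq₀
  calc q * (s * ‖quadExpSum w lam β‖) = q * s * ‖quadExpSum w lam β‖ := (mul_assoc _ _ _).symm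
    _ ≤ ‖((q * β : ℝ) : UnitAddCircle)‖ * ‖quadExpSum w lam β‖ := by gcongr
    _ ≤ q * (2 * (K * (1 + 19 * |lam - a / q| * N ^ 2))) := hrational.trans_eq (by ring)

end IsSlowlyVarying

end QuadraticSums

section MajorArcs

/-- The major arcs: pairs `(lam, β)` lying within `(r, s)` of a reduced pair of fractions
`(A / Q, B / Q)` with common denominator `Q ≤ Q₀`. The paper's `𝔐_j` is the case
`Q₀ = 2 ^ (6jε)`, `r = 2 ^ ((ε - 2)j)`, `s = 2 ^ ((ε - 1)j)`, with `ℝ²` in place of `𝕋²`. -/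
def majorArcs (Q₀ r s : ℝ) : Set (ℝ × ℝ) :=
  {p | ∃ (A B : ℤ) (Q : ℕ), 1 ≤ Q ∧ Q ≤ Q₀ ∧ Int.gcd A (Int.gcd B (Q : ℤ)) = 1 ∧
    |p.1 - A / Q| ≤ r ∧ |p.2 - B / Q| ≤ s}

lemma majorArcs_mono {Q₀ Q₁ r r' s s' : ℝ} (hQ : Q₀ ≤ Q₁) (hr : r ≤ r') (hs : s ≤ s') :
    majorArcs Q₀ r s ⊆ majorArcs Q₁ r' s' :=
  fun _ ⟨A, B, Q, hQ_pos, hQ_le, hgcd, hA, hB⟩ =>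
    ⟨A, B, Q, hQ_pos, hQ_le.trans hQ, hgcd, hA.trans hr, hB.trans hs⟩

lemma exists_reduced_fractions (A B : ℤ) {Q : ℕ} (hQ : 0 < Q) :
    ∃ (A' B' : ℤ) (Q' : ℕ), 0 < Q' ∧ Q' ≤ Q ∧ Int.gcd A' (Int.gcd B' (Q' : ℤ)) = 1 ∧
      (A / Q : ℝ) = A' / Q' ∧ (B / Q : ℝ) = B' / Q' := by
  set g := Int.gcd A (Int.gcd B (Q : ℤ)) with hg
  obtain ⟨A', hA⟩ : (g : ℤ) ∣ A := Int.gcd_dvd_left _ _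
  obtain ⟨B', hB⟩ : (g : ℤ) ∣ B := (Int.gcd_dvd_right _ _).trans (Int.gcd_dvd_left _ _)
  obtain ⟨Q', hQ'⟩ : g ∣ Q := by
    exact_mod_cast (Int.gcd_dvd_right A _).trans (Int.gcd_dvd_right B (Q : ℤ))
  have hg_pos : 0 < g := Nat.pos_of_mul_pos_right (hQ' ▸ hQ)
  have hQ'_pos : 0 < Q' := Nat.pos_of_mul_pos_left (hQ' ▸ hQ)
  have hg₀ : (g : ℝ) ≠ 0 := by exact_mod_cast hg_pos.ne'
  refine ⟨A', B', Q', hQ'_pos, hQ' ▸ Nat.le_mul_of_pos_left _ hg_pos, ?_, ?_, ?_⟩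
  · have hfactor : g = g * Int.gcd A' (Int.gcd B' (Q' : ℤ)) := by
      conv_lhs => rw [hg, hA, hB, hQ', Nat.cast_mul, Int.gcd_mul_left, Int.natAbs_natCast,
        Nat.cast_mul, Int.gcd_mul_left, Int.natAbs_natCast]
    exact Nat.eq_of_mul_eq_mul_left hg_pos (by rw [mul_one, ← hfactor])
  · rw [hA, hQ', Int.cast_mul, Nat.cast_mul, Int.cast_natCast, mul_div_mul_left _ _ hg₀]
  · rw [hB, hQ', Int.cast_mul, Nat.cast_mul, Int.cast_natCast, mul_div_mul_left _ _ hg₀]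

lemma mem_majorArcs_of_abs_sub_le {Q₀ r s lam β : ℝ} (A B : ℤ) {Q : ℕ} (hQ : 0 < Q)
    (hQ_le : Q ≤ Q₀) (hA : |lam - A / Q| ≤ r) (hB : |β - B / Q| ≤ s) :
    (lam, β) ∈ majorArcs Q₀ r s := by
  obtain ⟨A', B', Q', hQ', hQ'_le, hgcd, hA', hB'⟩ := exists_reduced_fractions A B hQ
  exact ⟨A', B', Q', hQ', (Nat.cast_le.mpr hQ'_le).trans hQ_le, hgcd, hA' ▸ hA, hB' ▸ hB⟩

end MajorArcs

section MinorArcs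

variable {w : ℤ → ℂ} {N : ℕ} {K : ℝ}

lemma IsSlowlyVarying.norm_quadExpSum_le_of_notMem_majorArcs (hw : IsSlowlyVarying w N K)
    {lam β T : ℝ} (hT : 1 ≤ T) (hTN : 8 * T ^ 4 ≤ N)
    (hminor : (lam, β) ∉ majorArcs (2 * T ^ 2) (8 * T ^ 6 / N ^ 2) (T ^ 7 / N)) :
    ‖quadExpSum w lam β‖ ≤ 306 * K * N / T := by
  have hN : (0 : ℝ) < N := by exact_mod_cast hw.pos
  have hK := hw.nonneg
  rcases le_or_gt ‖quadExpSum w lam β‖ (13 * K * N / T) with hsmall | hlarge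
  · exact hsmall.trans (by gcongr; norm_num)
  obtain ⟨a, q, hq, hqT, hqa⟩ := exists_rat_approx_of_div_lt_card_bohrSet (one_le_pow₀ hT)
    (by positivity) (by push_cast; field_simp; nlinarith [one_le_pow₀ hT (n := 2)])
    (by field_simp; linarith) (hw.div_lt_card_bohrSet_of_lt_norm_quadExpSum (by linarith) hlarge)
  have hlam : |lam - a / (2 * q : ℕ)| ≤ 8 * T ^ 6 / N ^ 2 := by
    have hhalf : |2 * lam - a / q| = 2 * |lam - a / (2 * q : ℕ)| := by
      rw [← abs_two, ← abs_mul, abs_two]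
      push_cast
      congr 1
      field_simp
    have : 16 * (T ^ 2 / N) ^ 2 * T ^ 2 = 2 * (8 * T ^ 6 / N ^ 2) := by ring
    linarith
  have hβ : ∀ b : ℤ, T ^ 7 / N < |β - b / (2 * q : ℕ)| := fun b => by
    by_contra! hb
    exact hminor (mem_majorArcs_of_abs_sub_le a b (by lia) (by push_cast; linarith) hlam hb)
  calc ‖quadExpSum w lam β‖
      ≤ 2 * (K * (1 + 19 * |lam - a / (2 * q : ℕ)| * N ^ 2)) / (T ^ 7 / N) :=
        hw.norm_quadExpSum_le_of_forall_lt_abs_sub a (by lia) (by positivity) hβ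
    _ ≤ 2 * (K * (T ^ 6 + 19 * (8 * T ^ 6 / N ^ 2) * N ^ 2)) / (T ^ 7 / N) := by
        gcongr; exact one_le_pow₀ hT
    _ = 306 * K * N / T := by field_simp; ring

lemma IsSlowlyVarying.norm_quadExpSum_le_of_notMem_majorArcs_pow (hw : IsSlowlyVarying w N K)
    {lam β T : ℝ} (hT : 1 ≤ T) (hTN : T ^ 7 ≤ N)
    (hminor : (lam, β) ∉ majorArcs (T ^ 3) (T ^ 9 / N ^ 2) (T ^ 9 / N)) :
    ‖quadExpSum w lam β‖ ≤ 306 * K * N / T := by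
  rcases lt_or_ge T 2 with hT₂ | hT₂
  · have : 0 ≤ N * K := mul_nonneg N.cast_nonneg hw.nonneg
    refine (hw.norm_quadExpSum_le lam β).trans ?_
    rw [le_div_iff₀ (by linarith)]
    nlinarith
  have h8 : (8 : ℝ) ≤ T ^ 3 := by
    calc (8 : ℝ) = 2 ^ 3 := by norm_num
      _ ≤ T ^ 3 := by gcongr
  refine hw.norm_quadExpSum_le_of_notMem_majorArcs hT ?_ fun hmajor =>
    hminor (majorArcs_mono ?_ ?_ ?_ hmajor)
  · calc 8 * T ^ 4 ≤ T ^ 3 * T ^ 4 := by gcongr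
      _ = T ^ 7 := by ring
      _ ≤ (N : ℝ) := hTN
  · calc 2 * T ^ 2 ≤ T * T ^ 2 := by gcongr
      _ = T ^ 3 := by ring
  · gcongr
    calc 8 * T ^ 6 ≤ T ^ 3 * T ^ 6 := by gcongr
      _ = T ^ 9 := by ring
  · gcongr
    norm_num

lemma exists_isSlowlyVarying {ψ : ℝ → ℂ} {C : NNReal} (hψ : LipschitzWith C ψ)
    (hsupp : HasCompactSupport ψ) :
    ∃ (R : ℕ) (K : ℝ), 0 < R ∧ 0 < K ∧
      ∀ N : ℕ, 0 < N → IsSlowlyVarying (fun m => ψ ((N : ℝ)⁻¹ * m)) (R * N) K := by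
  obtain ⟨B, hB⟩ := hsupp.exists_bound_of_continuous hψ.continuous
  obtain ⟨ρ, hρ⟩ := hsupp.isCompact.isBounded.subset_closedBall 0
  set R := ⌈ρ⌉₊ + 1
  have hR : (0 : ℝ) < R := by positivity
  refine ⟨R, max 1 (max B (C * R)), by positivity, by positivity, fun N hN => ?_⟩
  have hN₀ : (0 : ℝ) < N := by exact_mod_cast hN
  refine ⟨by positivity, fun m hm => ?_, fun m => (hB _).trans ?_, fun m => ?_⟩
  · have hmρ : |(N : ℝ)⁻¹ * m| ≤ R := by
      have hball := hρ (subset_tsupport ψ hm)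
      rw [mem_closedBall_zero_iff, Real.norm_eq_abs] at hball
      exact hball.trans ((Nat.le_ceil ρ).trans (by exact_mod_cast Nat.le_succ _))
    rw [abs_mul, abs_of_pos (inv_pos.mpr hN₀), inv_mul_le_iff₀ hN₀, mul_comm] at hmρ
    exact Finset.mem_coe.mpr (Finset.mem_Icc.mpr (abs_le.mp (by exact_mod_cast hmρ)))
  · exact (le_max_left _ _).trans (le_max_right _ _)
  · calc ‖ψ ((N : ℝ)⁻¹ * (m + 1 : ℤ)) - ψ ((N : ℝ)⁻¹ * m)‖
        ≤ C * ‖(N : ℝ)⁻¹ * (m + 1 : ℤ) - (N : ℝ)⁻¹ * m‖ := hψ.norm_sub_le _ _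
      _ = C * R / (R * N : ℕ) := by
          rw [← mul_sub, Int.cast_add, Int.cast_one, add_sub_cancel_left, mul_one, norm_inv,
            Real.norm_natCast]
          push_cast
          field_simp
      _ ≤ max 1 (max B (C * R)) / (R * N : ℕ) := by
          gcongr
          exact (le_max_right _ _).trans (le_max_right _ _)

lemma quadExpSum_const_mul (c : ℂ) (w : ℤ → ℂ) (lam β : ℝ) :
    quadExpSum (fun m => c * w m) lam β = c * quadExpSum w lam β := by
  simp only [quadExpSum, mul_left_comm _ c, tsum_mul_left]

theorem exists_norm_quadExpSum_le_rpow {ψ : ℝ → ℂ} {C : NNReal} (hψ : LipschitzWith C ψ)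
    (hsupp : HasCompactSupport ψ) {ε : ℝ} (hε : 0 < ε) :
    ∃ δ : ℝ, 0 < δ ∧ ∃ D : ℝ, 0 < D ∧ ∀ N : ℕ, 0 < N → ∀ lam β : ℝ,
      (lam, β) ∉ majorArcs ((N : ℝ) ^ (6 * ε)) ((N : ℝ) ^ (ε - 2)) ((N : ℝ) ^ (ε - 1)) →
      ‖quadExpSum (fun m => (N : ℂ)⁻¹ * ψ ((N : ℝ)⁻¹ * m)) lam β‖ ≤ D * (N : ℝ) ^ (-δ) := by
  obtain ⟨R, K, hR, hK, hw⟩ := exists_isSlowlyVarying hψ hsupp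
  refine ⟨min ε 1 / 9, by positivity, 306 * K * R, by positivity, fun N hN lam β hminor => ?_⟩
  have hN₀ : (0 : ℝ) < N := by exact_mod_cast hN
  have hN₁ : (1 : ℝ) ≤ N := by exact_mod_cast hN
  have hNRN : (N : ℝ) ≤ (R * N : ℕ) := by exact_mod_cast Nat.le_mul_of_pos_left N hR
  have hε_min := min_le_left ε 1
  have h1_min := min_le_right ε 1
  set T := (N : ℝ) ^ (min ε 1 / 9) with hT
  have hT₁ : 1 ≤ T := one_le_rpow hN₁ (by positivity)
  have hT_pow : ∀ (k : ℕ) {x : ℝ}, min ε 1 / 9 * k ≤ x → T ^ k ≤ (N : ℝ) ^ x := fun k x hx => by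
    rw [hT, ← rpow_mul_natCast hN₀.le]
    exact rpow_le_rpow_of_exponent_le hN₁ hx
  have hT₉ : T ^ 9 ≤ (N : ℝ) ^ ε := hT_pow 9 (by push_cast; linarith)
  have hbound : ‖quadExpSum (fun m => ψ ((N : ℝ)⁻¹ * m)) lam β‖ ≤ 306 * K * (R * N : ℕ) / T := by
    refine (hw N hN).norm_quadExpSum_le_of_notMem_majorArcs_pow hT₁ ?_ fun hmajor =>
      hminor (majorArcs_mono ?_ ?_ ?_ hmajor)
    · exact (hT_pow 7 (by push_cast; linarith)).trans ((rpow_one _).trans_le hNRN)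
    · exact hT_pow 3 (by push_cast; linarith)
    · rw [rpow_sub hN₀, rpow_two]
      gcongr
    · rw [rpow_sub hN₀, rpow_one]
      gcongr
  rw [quadExpSum_const_mul, norm_mul, norm_inv, Complex.norm_natCast, rpow_neg hN₀.le, ← hT,
    inv_mul_le_iff₀ hN₀]
  exact hbound.trans_eq (by push_cast; ring)

end MinorArcs

theorem stmt18_general {ψ : ℝ → ℂ} {C : NNReal} (hψ : LipschitzWith C ψ)
    (hsupp : HasCompactSupport ψ) {ε : ℝ} (hε : 0 < ε) :
    ∃ δ : ℝ, 0 < δ ∧ ∃ D : ℝ, 0 < D ∧ ∀ (j : ℕ) (lam β : ℝ),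
      (lam, β) ∉ majorArcs (2 ^ (6 * (j : ℝ) * ε)) (2 ^ ((ε - 2) * j)) (2 ^ ((ε - 1) * j)) →
      ‖quadExpSum (fun m => (2 : ℂ) ^ (-(j : ℤ)) * ψ ((2 : ℝ) ^ (-(j : ℤ)) * m)) lam β‖ ≤
        D * 2 ^ (-δ * j) := by
  obtain ⟨δ, hδ, D, hD, hbound⟩ := exists_norm_quadExpSum_le_rpow hψ hsupp hε
  refine ⟨δ, hδ, D, hD, fun j lam β hminor => ?_⟩
  have hdyadic : ∀ x : ℝ, ((2 : ℝ) ^ j) ^ x = 2 ^ (x * j) := fun x => by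
    rw [← rpow_natCast, ← rpow_mul two_pos.le, mul_comm]
  have hbound_pow := hbound (2 ^ j) (by positivity) lam β
  simp only [Nat.cast_pow, Nat.cast_ofNat, hdyadic, mul_right_comm _ ε] at hbound_pow
  simp only [← zpow_natCast, ← zpow_neg] at hbound_pow
  exact hbound_pow hminor

/-- Minor-arc estimate (e:minor): if `(λ,β)` lies in no major box
`{|λ - A/Q| ≤ 2^{(ε-2)j}, |β - B/Q| ≤ 2^{(ε-1)j}}` with `gcd(A,B,Q) = 1`, `1 ≤ Q ≤ 2^{6jε}`,
then `|M_j(λ,β)| ≲ 2^{-δj}` for some `δ = δ(ε) > 0`. -/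
theorem stmt18 (ψ : ℝ → ℝ) (hψ : ContDiff ℝ (⊤ : ℕ∞) ψ)
    (hsupp : ∀ x, ψ x ≠ 0 → 1 / 4 ≤ |x| ∧ |x| ≤ 1)
    (ε : ℝ) (hε0 : 0 < ε) (hε : ε < 1 / 7) :
    ∃ δ : ℝ, 0 < δ ∧ ∃ C : ℝ, 0 < C ∧
    ∀ (j : ℕ), 1 ≤ j → ∀ lam β : ℝ,
    (¬ ∃ (A B : ℤ) (Q : ℕ), 1 ≤ Q ∧ (Q : ℝ) ≤ 2 ^ (6 * (j : ℝ) * ε) ∧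
        Int.gcd A (Int.gcd B (Q : ℤ)) = 1 ∧
        |lam - (A : ℝ) / Q| ≤ 2 ^ ((ε - 2) * j) ∧ |β - (B : ℝ) / Q| ≤ 2 ^ ((ε - 1) * j)) →
    ‖∑' m : ℤ, Complex.exp (Complex.I *
        ((2 * π * (lam * (m : ℝ) ^ 2 - β * m) : ℝ) : ℂ)) *
        (((2 : ℝ) ^ (-(j : ℤ)) * ψ ((2 : ℝ) ^ (-(j : ℤ)) * m) : ℝ) : ℂ)‖ ≤
      C * 2 ^ (-δ * j) := by
  have hcompact : HasCompactSupport ψ := .intro (isCompact_Icc (a := -1) (b := 1)) fun x hx =>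
    not_not.mp fun h => hx (abs_le.mp (hsupp x h).2)
  obtain ⟨C, hC⟩ := (hψ.of_le (mod_cast le_top)).lipschitzWith_of_hasCompactSupport hcompact
    one_ne_zero
  obtain ⟨δ, hδ, D, hD, hbound⟩ := stmt18_general (Complex.isometry_ofReal.lipschitz.comp hC)
    (hcompact.comp_left Complex.ofReal_zero) hε0
  refine ⟨δ, hδ, D, hD, fun j _ lam β hminor => ?_⟩
  simpa [quadExpSum, fourierChar_apply, mul_comm] using hbound j lam β hminor
end
end
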